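/- (Limits of finite-volume measures with tempered boundary conditions are regular Gibbs measures.) Let V be a countable set, let J be symmetric interactions satisfying the integrability condition with n = 2 (with f, δ_f, M_f), let β ≥ 0, and let ρ be a measure on ℝ with 0 < ∫_ℝ e^{a|u|²} dρ(u) < ∞ for all a > 0. Let (Λ_i)_{i≥1} be finite subsets of V with Λ_i ↗ V, let λ ≥ 1, and let ξ ∈ ℝ^V be boundary conditions for which there exists A_max ∈ [1,∞) such that for every x ∈ V and every C ≥ 1, limsup_{Λ↗V} A(x,Λ,λ,ξ,C) ≤ A_max. If the measures ν^ξ_{Λ_i,β,ρ,J} converge (in the sense that for every finite Λ' ⊂ V their Λ'-marginals converge weakly) to a probability measure ν on ℝ^V, then ν is an a-regular Gibbs measure for every a ≥ 2βM_fλ. -/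

import Mathlib

open MeasureTheory Filter
open scoped ENNReal Classical

/-- A walk of length `m` in `(R, J)`. -/
def IsWalk {V : Type*} (J : V → V → ℝ) (R : Set V) (m : ℕ) (w : ℕ → V) : Prop :=
  (∀ i, 0 < i → i < m → w i ∈ R) ∧ ∀ i < m, J (w i) (w (i + 1)) ≠ 0

/-- The quantity `A(x, R, λ, ξ, C)` (case `n = 2`). -/
noncomputable def ARealL {V : Type*} (J : V → V → ℝ) (f : ℝ → ℝ) (lam : ℝ)
    (ξ : V → ℝ) (C : ℝ) (x : V) (R : Set V) : ℝ :=
  sInf {A : ℝ | 1 ≤ A ∧ ∀ (m : ℕ) (w : ℕ → V), IsWalk J R m w → w 0 = x → w m ∈ R →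
    |∑' z : {z : V // z ∉ R}, J (w m) z.1 * ξ z.1| ≤
      (∑' z : {z : V // z ∉ R}, |J (w m) z.1| * f (J (w m) z.1)) * C * A * lam ^ (m + 1) *
        ∏ i ∈ Finset.range m, f (J (w i) (w (i + 1)))}

/-- The Hamiltonian `-H^ξ_{Λ,J}` (already multiplied by `β`). -/
noncomputable def hamil {V : Type*} (J : V → V → ℝ) (β : ℝ) (Λ : Finset V)
    (ξ : V → ℝ) (φ : ↥Λ → ℝ) : ℝ :=
  β * ((1 / 2) * ∑ x : ↥Λ, ∑ y : ↥Λ,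
      (if x.1 ≠ y.1 then J x.1 y.1 * φ x * φ y else 0)
    + ∑ x : ↥Λ, φ x * ∑' y : {y : V // y ∉ Λ}, J x.1 y.1 * ξ y.1)

/-- The finite-volume Gibbs measure `ν^ξ_{Λ,β,ρ,J}` on `ℝ^Λ`. -/
noncomputable def gibbs {V : Type*} (J : V → V → ℝ) (β : ℝ) (ρ : Measure ℝ)
    (Λ : Finset V) (ξ : V → ℝ) : Measure (↥Λ → ℝ) :=
  (((Measure.pi fun _ : ↥Λ => ρ).withDensity
      fun φ => ENNReal.ofReal (Real.exp (hamil J β Λ ξ φ))) Set.univ)⁻¹ •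
    (Measure.pi fun _ : ↥Λ => ρ).withDensity
      fun φ => ENNReal.ofReal (Real.exp (hamil J β Λ ξ φ))

/-- The `Λ'`-marginal of a measure on `ℝ^Λ`, for `Λ' ⊆ Λ`. -/
noncomputable def marg {V : Type*} {Λ' Λ : Finset V} (h : Λ' ⊆ Λ)
    (μ : Measure (↥Λ → ℝ)) : Measure (↥Λ' → ℝ) :=
  μ.map fun φ x => φ ⟨x.1, h x.2⟩

/-- The normalized product measure `ν^0_{Λ,0,ρ,0}`. -/
noncomputable def prodN {V : Type*} (ρ : Measure ℝ) (Λ : Finset V) :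
    Measure (↥Λ → ℝ) :=
  ((Measure.pi fun _ : ↥Λ => ρ) Set.univ)⁻¹ • Measure.pi fun _ : ↥Λ => ρ

/-- The tilted single-site measure `dρ_b(u) = e^(b|u|²) dρ(u)`. -/
noncomputable def rhoMod (ρ : Measure ℝ) (b : ℝ) : Measure ℝ :=
  ρ.withDensity fun u => ENNReal.ofReal (Real.exp (b * u ^ 2))

/-- Restriction of an infinite-volume configuration to a finite set of vertices. -/
def restrictTo {V : Type*} (Λ : Finset V) (φ : V → ℝ) : ↥Λ → ℝ := fun x => φ x.1

/-- A measure `ν` on `ℝ^V` is regular with respect to the single-site measure `ρa`: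
there is `B ∈ [0,∞)` such that for every finite `Λ` the `Λ`-marginal of `ν` has
density at most `e^{B|Λ|}` with respect to the normalized product of `ρa`. -/
def IsRegularWRT {V : Type*} (ρa : Measure ℝ) (ν : Measure (V → ℝ)) : Prop :=
  ∃ B : ℝ, 0 ≤ B ∧ ∀ Λ : Finset V,
    ν.map (restrictTo Λ) ≤ ENNReal.ofReal (Real.exp (B * Λ.card)) • prodN ρa Λ

/-- `ν` is a Gibbs measure: it satisfies the DLR equations. -/
def IsGibbsMeasure {V : Type*} (J : V → V → ℝ) (β : ℝ) (ρ : Measure ℝ)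
    (ν : Measure (V → ℝ)) : Prop :=
  ∀ (Λ : Finset V) (g : (↥Λ → ℝ) → ℝ), Measurable g → (∃ K, ∀ ψ, |g ψ| ≤ K) →
    ∫ φ, g (restrictTo Λ φ) ∂ν = ∫ η, ∫ ψ, g ψ ∂(gibbs J β ρ Λ η) ∂ν

/-!
Explore `Λ` from a finite set `Δ`: a neighbour `s` of an explored vertex `x` is large if
`|φ s| > λ f(J x s) max(|φ x|, K)`, and large neighbours are explored in turn. When the exploration
stops at a set `P`, every spin next to `P` is dominated by the spins of `P`, and by temperedness so
is the boundary field on `P`; hence resampling the spins of `P` from `[-M, M]` changes the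
Hamiltonian by at most `2 β M_f λ ∑_{x ∈ P} max(|φ x|, K)²`. Since `f ≥ √(log 1/|t|)`, the Gaussian
tail satisfies `e^{-f(J)²} ≤ D |J|`, so for large `K` the total cost of discovering the large
neighbours of one vertex is small, and the expansion over explorations is a convergent branching
series. The densities of all marginals are thus bounded by `C^{|Δ|} ∏ e^{a φ²}` uniformly in the
volume, which gives regularity. It also gives uniform first moments `𝔼|φ y| = O(f(J x y))`, under
which the field felt by a finite set converges in law, and the DLR equation passes to the limit
because the finite-volume Gibbs measure depends continuously on that field.
-/

/-! ### Product measures -/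

section ProductMeasure

variable {ι : Type*} {X : ι → Type*} [∀ i, MeasurableSpace (X i)]

lemma measurable_piecewise_pi (A : Set ι) [∀ i, Decidable (i ∈ A)] :
    Measurable fun p : (∀ i, X i) × (∀ i, X i) => A.piecewise p.1 p.2 := by
  refine measurable_pi_iff.2 fun i => ?_
  by_cases hi : i ∈ A
  · simp only [Set.piecewise, hi, if_true]
    fun_prop
  · simp only [Set.piecewise, hi, if_false]
    fun_prop

variable (μ : ∀ i, Measure (X i)) [∀ i, IsProbabilityMeasure (μ i)]

lemma map_piecewise_prod_infinitePi (A : Set ι) [∀ i, Decidable (i ∈ A)] :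
    ((Measure.infinitePi μ).prod (Measure.infinitePi μ)).map
      (fun p => A.piecewise p.1 p.2) = Measure.infinitePi μ := by
  refine Measure.eq_infinitePi _ fun s t ht => ?_
  have h_preimage : (fun p : (∀ i, X i) × (∀ i, X i) => A.piecewise p.1 p.2) ⁻¹' Set.pi s t =
      Set.pi ↑(s.filter (· ∈ A)) t ×ˢ Set.pi ↑(s.filter (· ∉ A)) t := by
    ext ⟨ψ, φ⟩
    simp only [Set.mem_preimage, Set.mem_pi, Finset.mem_coe, Set.mem_prod, Finset.mem_filter,
      ← forall_and]
    refine forall_congr' fun i => ?_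
    by_cases hi : i ∈ A <;> simp [hi]
  rw [Measure.map_apply (measurable_piecewise_pi A)
      (MeasurableSet.pi s.countable_toSet fun i _ => ht i), h_preimage, Measure.prod_prod,
    Measure.infinitePi_pi _ fun i _ => ht i, Measure.infinitePi_pi _ fun i _ => ht i,
    Finset.prod_filter_mul_prod_filter_not]

lemma lintegral_infinitePi_eq_lintegral_piecewise (A : Set ι) [∀ i, Decidable (i ∈ A)]
    {F : (∀ i, X i) → ℝ≥0∞} (hF : Measurable F) :
    ∫⁻ φ, F φ ∂Measure.infinitePi μ =
      ∫⁻ φ, ∫⁻ ψ, F (A.piecewise ψ φ) ∂Measure.infinitePi μ ∂Measure.infinitePi μ := by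
  conv_lhs => rw [← map_piecewise_prod_infinitePi μ A]
  rw [lintegral_map hF (measurable_piecewise_pi A),
    lintegral_prod_symm' (fun p : (∀ i, X i) × (∀ i, X i) => F (A.piecewise p.1 p.2))
      (hF.comp (measurable_piecewise_pi A))]

lemma lintegral_mul_infinitePi_of_dependsOn (A : Set ι) {F G : (∀ i, X i) → ℝ≥0∞}
    (hF : Measurable F) (hG : Measurable G) (hFA : DependsOn F A) (hGA : DependsOn G Aᶜ) :
    ∫⁻ φ, F φ * G φ ∂Measure.infinitePi μ =
      (∫⁻ φ, F φ ∂Measure.infinitePi μ) * ∫⁻ φ, G φ ∂Measure.infinitePi μ := by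
  have hF_piecewise (ψ φ : ∀ i, X i) : F (A.piecewise ψ φ) = F ψ :=
    hFA fun i hi => Set.piecewise_eq_of_mem _ _ _ hi
  have hG_piecewise (ψ φ : ∀ i, X i) : G (A.piecewise ψ φ) = G φ :=
    hGA fun i hi => Set.piecewise_eq_of_notMem _ _ _ hi
  rw [lintegral_infinitePi_eq_lintegral_piecewise μ A (F := fun φ => F φ * G φ) (hF.mul hG)]
  simp_rw [hF_piecewise, hG_piecewise, lintegral_mul_const _ hF, lintegral_const_mul _ hG]

lemma lintegral_eval_infinitePi (i : ι) {g : X i → ℝ≥0∞} (hg : Measurable g) :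
    ∫⁻ φ, g (φ i) ∂Measure.infinitePi μ = ∫⁻ u, g u ∂μ i :=
  (measurePreserving_eval_infinitePi μ i).lintegral_comp hg

lemma measurable_prod_eval (S : Finset ι) {g : ∀ i, X i → ℝ≥0∞} (hg : ∀ i, Measurable (g i)) :
    Measurable fun φ : ∀ i, X i => ∏ i ∈ S, g i (φ i) :=
  Finset.measurable_prod _ fun i _ => (hg i).comp (measurable_pi_apply i)

lemma dependsOn_prod_eval {Y : ι → Type*} (S : Finset ι) (g : ∀ i, Y i → ℝ≥0∞) :
    DependsOn (fun φ : ∀ i, Y i => ∏ i ∈ S, g i (φ i)) S :=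
  fun _ _ h => Finset.prod_congr rfl fun i hi => by rw [h i hi]

lemma lintegral_prod_eval_infinitePi (S : Finset ι) {g : ∀ i, X i → ℝ≥0∞}
    (hg : ∀ i, Measurable (g i)) :
    ∫⁻ φ, ∏ i ∈ S, g i (φ i) ∂Measure.infinitePi μ = ∏ i ∈ S, ∫⁻ u, g i u ∂μ i := by
  induction S using Finset.induction_on with
  | empty => simp
  | insert j S hj ih =>
    simp_rw [Finset.prod_insert hj]
    have h_singleton : DependsOn (fun φ : ∀ i, X i => g j (φ j)) {j} :=
      fun _ _ h => by simp only [h j rfl]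
    have h_compl : (S : Set ι) ⊆ {j}ᶜ :=
      Set.subset_compl_singleton_iff.2 (mt Finset.mem_coe.1 hj)
    rw [lintegral_mul_infinitePi_of_dependsOn μ {j} (F := fun φ => g j (φ j)) (by fun_prop)
      (measurable_prod_eval S hg) h_singleton ((dependsOn_prod_eval S g).mono h_compl),
      lintegral_eval_infinitePi μ j (hg j), ih]

end ProductMeasure

/-! ### Energies and external fields -/

section Energy

variable {V : Type*}

/-- `β` times the negative of the Hamiltonian in the finite volume `Λ` under an arbitrary external
field `h`, as a function of an infinite-volume configuration. -/
noncomputable def energy (J : V → V → ℝ) (β : ℝ) (Λ : Finset V) (h φ : V → ℝ) : ℝ :=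
  β * ((1 / 2) * ∑ x ∈ Λ, ∑ y ∈ Λ, (if x ≠ y then J x y * φ x * φ y else 0)
    + ∑ x ∈ Λ, φ x * h x)

/-- The external field `∑_{y ∉ Λ} J_{x,y} ξ_y` that the boundary condition `ξ` exerts on the
vertices of `Λ`. -/
noncomputable def boundaryField (J : V → V → ℝ) (Λ : Finset V) (ξ : V → ℝ) (x : V) : ℝ :=
  ∑' y : {y : V // y ∉ Λ}, J x y * ξ y

/-- The field acting on `Λ` once the spins of `Λ' \ Λ` are frozen to those of `φ`, where `h` is the
external field on `Λ'`. -/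
noncomputable def effectiveField (J : V → V → ℝ) (Λ Λ' : Finset V) (h φ : V → ℝ) (x : V) : ℝ :=
  h x + ∑ y ∈ Λ' \ Λ, J x y * φ y

variable {J : V → V → ℝ} {β : ℝ} {Λ Λ' : Finset V}

lemma hamil_restrictTo (ξ φ : V → ℝ) :
    hamil J β Λ ξ (restrictTo Λ φ) = energy J β Λ (boundaryField J Λ ξ) φ := by
  simp only [hamil, energy, restrictTo, boundaryField, ← Finset.sum_coe_sort Λ]

lemma measurable_uncurry_energy : Measurable (Function.uncurry (energy J β Λ)) := by
  have h_pair (x y : V) : Measurable fun p : (V → ℝ) × (V → ℝ) =>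
      if x ≠ y then J x y * p.2 x * p.2 y else 0 := by
    split_ifs <;> fun_prop
  unfold energy Function.uncurry
  fun_prop

lemma measurable_energy (h : V → ℝ) : Measurable (energy J β Λ h) :=
  measurable_uncurry_energy.of_uncurry_left

lemma continuous_energy_field (φ : V → ℝ) : Continuous fun h => energy J β Λ h φ := by
  unfold energy
  fun_prop

lemma dependsOn_energy (h : V → ℝ) : DependsOn (energy J β Λ h) Λ := by
  intro φ ψ hφψ
  have h_pairs : ∑ x ∈ Λ, ∑ y ∈ Λ, (if x ≠ y then J x y * φ x * φ y else 0) =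
      ∑ x ∈ Λ, ∑ y ∈ Λ, if x ≠ y then J x y * ψ x * ψ y else 0 :=
    Finset.sum_congr rfl fun x hx => Finset.sum_congr rfl fun y hy => by
      rw [hφψ x hx, hφψ y hy]
  have h_field : ∑ x ∈ Λ, φ x * h x = ∑ x ∈ Λ, ψ x * h x :=
    Finset.sum_congr rfl fun x hx => by rw [hφψ x hx]
  simp only [energy, h_pairs, h_field]

lemma energy_eq_add_sdiff (hJ : ∀ x y, J x y = J y x) (hΛ : Λ ⊆ Λ') (h φ : V → ℝ) :
    energy J β Λ' h φ =
      energy J β Λ (effectiveField J Λ Λ' h φ) φ + energy J β (Λ' \ Λ) h φ := by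
  set T : V → V → ℝ := fun x y => if x ≠ y then J x y * φ x * φ y else 0 with hT
  have hT_symm (x y : V) : T x y = T y x := by
    simp only [hT, ne_comm (a := x), hJ x y, mul_right_comm]
  have hT_cross : ∑ x ∈ Λ, ∑ y ∈ Λ' \ Λ, T x y =
      ∑ x ∈ Λ, φ x * ∑ y ∈ Λ' \ Λ, J x y * φ y := by
    refine Finset.sum_congr rfl fun x hx => ?_
    rw [Finset.mul_sum]
    refine Finset.sum_congr rfl fun y hy => ?_
    have hxy : x ≠ y := fun h => (Finset.mem_sdiff.1 hy).2 (h ▸ hx)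
    simp only [hT, if_pos hxy]
    ring
  have hT_cross' : ∑ x ∈ Λ' \ Λ, ∑ y ∈ Λ, T x y = ∑ x ∈ Λ, ∑ y ∈ Λ' \ Λ, T x y := by
    rw [Finset.sum_comm]
    simp_rw [hT_symm]
  have h_split (g : V → ℝ) : ∑ x ∈ Λ', g x = ∑ x ∈ Λ, g x + ∑ x ∈ Λ' \ Λ, g x := by
    rw [add_comm, Finset.sum_sdiff hΛ]
  change β * (1 / 2 * ∑ x ∈ Λ', ∑ y ∈ Λ', T x y + _) =
    β * (1 / 2 * ∑ x ∈ Λ, ∑ y ∈ Λ, T x y + _) + β * (1 / 2 * ∑ x ∈ Λ' \ Λ, ∑ y ∈ Λ' \ Λ, T x y + _)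
  simp only [h_split, effectiveField, mul_add, Finset.sum_add_distrib, hT_cross', hT_cross]
  ring

lemma sum_sum_mul_mul_le (hJ : ∀ x y, J x y = J y x) (P : Finset V) (m : V → ℝ) :
    ∑ x ∈ P, ∑ y ∈ P, |J x y| * (m x * m y) ≤ ∑ x ∈ P, (∑ y ∈ P, |J x y|) * m x ^ 2 := by
  have h_amgm (x y : V) :
      |J x y| * (m x * m y) ≤ |J x y| * m x ^ 2 / 2 + |J y x| * m y ^ 2 / 2 := by
    rw [hJ y x]
    nlinarith [mul_nonneg (abs_nonneg (J x y)) (sq_nonneg (m x - m y))]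
  calc ∑ x ∈ P, ∑ y ∈ P, |J x y| * (m x * m y)
      ≤ ∑ x ∈ P, ∑ y ∈ P, (|J x y| * m x ^ 2 / 2 + |J y x| * m y ^ 2 / 2) :=
        Finset.sum_le_sum fun x _ => Finset.sum_le_sum fun y _ => h_amgm x y
    _ = ∑ x ∈ P, ∑ y ∈ P, |J x y| * m x ^ 2 := by
        simp only [Finset.sum_add_distrib]
        rw [Finset.sum_comm (f := fun x y => |J y x| * m y ^ 2 / 2)]
        simp only [← Finset.sum_add_distrib, add_halves]
    _ = ∑ x ∈ P, (∑ y ∈ P, |J x y|) * m x ^ 2 := by simp only [Finset.sum_mul]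

lemma abs_energy_le (hJ : ∀ x y, J x y = J y x) (hβ : 0 ≤ β) {P : Finset V} {h φ m : V → ℝ}
    (hm : ∀ x ∈ P, |φ x| ≤ m x) :
    |energy J β P h φ| ≤
      β * ∑ x ∈ P, (1 / 2 * (∑ y ∈ P, |J x y|) * m x ^ 2 + |h x| * m x) := by
  have h_pairs : |∑ x ∈ P, ∑ y ∈ P, (if x ≠ y then J x y * φ x * φ y else 0)| ≤
      ∑ x ∈ P, (∑ y ∈ P, |J x y|) * m x ^ 2 := by
    refine le_trans ?_ (sum_sum_mul_mul_le hJ P m)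
    refine (Finset.abs_sum_le_sum_abs _ _).trans (Finset.sum_le_sum fun x hx => ?_)
    refine (Finset.abs_sum_le_sum_abs _ _).trans (Finset.sum_le_sum fun y hy => ?_)
    have h_mul : |φ x| * |φ y| ≤ m x * m y :=
      mul_le_mul (hm x hx) (hm y hy) (abs_nonneg _) ((abs_nonneg _).trans (hm x hx))
    have h_bound : |J x y * φ x * φ y| ≤ |J x y| * (m x * m y) := by
      rw [abs_mul, abs_mul, mul_assoc]
      gcongr
    split_ifs
    · exact h_bound
    · exact abs_zero.trans_le ((abs_nonneg _).trans h_bound)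
  have h_field : |∑ x ∈ P, φ x * h x| ≤ ∑ x ∈ P, |h x| * m x := by
    refine (Finset.abs_sum_le_sum_abs _ _).trans (Finset.sum_le_sum fun x hx => ?_)
    rw [abs_mul, mul_comm]
    gcongr
    exact hm x hx
  rw [energy, abs_mul, abs_of_nonneg hβ, Finset.sum_add_distrib]
  refine mul_le_mul_of_nonneg_left ((abs_add_le _ _).trans (add_le_add ?_ h_field)) hβ
  simp only [mul_assoc (1 / 2 : ℝ), ← Finset.mul_sum]
  rw [abs_mul, abs_of_pos (by norm_num : (0 : ℝ) < 1 / 2)]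
  gcongr

end Energy

/-! ### Interactions and tempered fields -/

section Interaction

variable {V : Type*}

/-- `J` is a symmetric interaction whose strengths, weighted by `f ≥ 1`, are summable at every
vertex with sum at most `Mf`. -/
structure IsInteraction (J : V → V → ℝ) (f : ℝ → ℝ) (Mf : ℝ) : Prop where
  symm : ∀ x y, J x y = J y x
  one_le : ∀ t, 1 ≤ f t
  summable : ∀ x, Summable fun y => |J x y| * f (J x y)
  tsum_le : ∀ x, ∑' y, |J x y| * f (J x y) ≤ Mf

/-- The total weighted strength `∑_{y ∉ Λ} |J_{x,y}| f(J_{x,y})` of the interactions of `x` with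
the complement of `Λ`. -/
noncomputable def boundaryWeight (J : V → V → ℝ) (f : ℝ → ℝ) (Λ : Finset V) (x : V) : ℝ :=
  ∑' y : {y : V // y ∉ Λ}, |J x y| * f (J x y)

variable {J : V → V → ℝ} {f : ℝ → ℝ} {Mf : ℝ}

namespace IsInteraction

lemma pos (hJ : IsInteraction J f Mf) (t : ℝ) : 0 < f t :=
  one_pos.trans_le (hJ.one_le t)

lemma weight_nonneg (hJ : IsInteraction J f Mf) (x y : V) : 0 ≤ |J x y| * f (J x y) :=
  mul_nonneg (abs_nonneg _) (hJ.pos _).le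

lemma abs_le_mul (hJ : IsInteraction J f Mf) (x y : V) : |J x y| ≤ |J x y| * f (J x y) :=
  le_mul_of_one_le_right (abs_nonneg _) (hJ.one_le _)

lemma sum_abs_le (hJ : IsInteraction J f Mf) (x : V) (S : Finset V) : ∑ y ∈ S, |J x y| ≤ Mf :=
  calc ∑ y ∈ S, |J x y| ≤ ∑ y ∈ S, |J x y| * f (J x y) :=
        Finset.sum_le_sum fun y _ => hJ.abs_le_mul x y
    _ ≤ ∑' y, |J x y| * f (J x y) :=
        (hJ.summable x).sum_le_tsum S fun y _ => hJ.weight_nonneg x y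
    _ ≤ Mf := hJ.tsum_le x

lemma boundaryWeight_nonneg (hJ : IsInteraction J f Mf) (Λ : Finset V) (x : V) :
    0 ≤ boundaryWeight J f Λ x :=
  tsum_nonneg fun y => hJ.weight_nonneg x y

lemma sum_add_boundaryWeight_le (hJ : IsInteraction J f Mf) (Λ : Finset V) (x : V) :
    ∑ y ∈ Λ, |J x y| * f (J x y) + boundaryWeight J f Λ x ≤ Mf :=
  ((hJ.summable x).sum_add_tsum_subtype_compl Λ).trans_le (hJ.tsum_le x)

lemma boundaryField_eq_zero (hJ : IsInteraction J f Mf) (ξ : V → ℝ) {Λ : Finset V} {x : V}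
    (hx : boundaryWeight J f Λ x = 0) : boundaryField J Λ ξ x = 0 := by
  have h_hasSum : HasSum (fun y : {y : V // y ∉ Λ} => |J x y| * f (J x y)) 0 :=
    hx.subst (motive := HasSum _) ((hJ.summable x).subtype _).hasSum
  have h_zero := (hasSum_zero_iff_of_nonneg fun y : {y : V // y ∉ Λ} => hJ.weight_nonneg x y).1
    h_hasSum
  have hJ_zero (y : {y : V // y ∉ Λ}) : J x y = 0 :=
    abs_eq_zero.1 ((mul_eq_zero.1 (congrFun h_zero y)).resolve_right (hJ.pos _).ne')
  simp only [boundaryField, hJ_zero, zero_mul, tsum_zero]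

end IsInteraction

/-- `ReachesLevel J f lam Λ Δ K z r` says that some walk in `Λ` leads from `Δ` to `z` and that the
level `K`, multiplied by `lam * f (J x y)` along each of its steps `x → y`, has then become `r`. In
the exploration of a configuration from `Δ`, `r` bounds from below the size of the spin at `z`. -/
inductive ReachesLevel (J : V → V → ℝ) (f : ℝ → ℝ) (lam : ℝ) (Λ Δ : Finset V) (K : ℝ) :
    V → ℝ → Prop
  | root {z : V} : z ∈ Δ → ReachesLevel J f lam Λ Δ K z K
  | step {z y : V} {r : ℝ} : ReachesLevel J f lam Λ Δ K z r → y ∈ Λ → J z y ≠ 0 →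
      ReachesLevel J f lam Λ Δ K y (lam * f (J z y) * r)

/-- The external field `h` on `Λ` is tempered as seen from `Δ`: at each vertex it is dominated by
the level at which the exploration from `Δ` reaches that vertex. -/
def IsTempered (J : V → V → ℝ) (f : ℝ → ℝ) (lam : ℝ) (Λ Δ : Finset V) (h : V → ℝ) (K : ℝ) : Prop :=
  ∀ z r, ReachesLevel J f lam Λ Δ K z r → |h z| ≤ boundaryWeight J f Λ z * (lam * r)

variable {lam : ℝ} {Λ Δ : Finset V} {K : ℝ}

lemma IsWalk.snoc {R : Set V} {m : ℕ} {w : ℕ → V} (hw : IsWalk J R m w) (hm : w m ∈ R) {y : V}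
    (hy : J (w m) y ≠ 0) : IsWalk J R (m + 1) (Function.update w (m + 1) y) := by
  refine ⟨fun i hi him => ?_, fun i hi => ?_⟩
  · rw [Function.update_of_ne him.ne]
    rcases (Nat.lt_succ_iff.1 him).lt_or_eq with h_lt | rfl
    exacts [hw.1 i hi h_lt, hm]
  · rw [Function.update_of_ne hi.ne]
    rcases (Nat.lt_succ_iff.1 hi).lt_or_eq with h_lt | rfl
    · rw [Function.update_of_ne (by lia)]
      exact hw.2 i h_lt
    · rwa [Function.update_self]

lemma ReachesLevel.exists_isWalk (hΔ : Δ ⊆ Λ) {z : V} {r : ℝ}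
    (h : ReachesLevel J f lam Λ Δ K z r) :
    ∃ (m : ℕ) (w : ℕ → V), IsWalk J (Λ : Set V) m w ∧ w 0 ∈ Δ ∧ w m = z ∧ z ∈ Λ ∧
      r = K * lam ^ m * ∏ i ∈ Finset.range m, f (J (w i) (w (i + 1))) := by
  induction h with
  | @root z hz =>
    exact ⟨0, fun _ => z, ⟨fun i _ hi => by lia, fun i hi => by lia⟩, hz, rfl, hΔ hz, by simp⟩
  | @step z y r _ hy hJ ih =>
    obtain ⟨m, w, hw, hw_zero, rfl, hz, rfl⟩ := ih
    refine ⟨m + 1, Function.update w (m + 1) y, hw.snoc hz hJ, ?_, Function.update_self .., hy, ?_⟩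
    · rwa [Function.update_of_ne (by lia)]
    · have h_prod : ∏ i ∈ Finset.range m, f (J (Function.update w (m + 1) y i)
          (Function.update w (m + 1) y (i + 1))) =
          ∏ i ∈ Finset.range m, f (J (w i) (w (i + 1))) := by
        refine Finset.prod_congr rfl fun i hi => ?_
        have := Finset.mem_range.1 hi
        rw [Function.update_of_ne (by lia), Function.update_of_ne (by lia)]
      rw [Finset.prod_range_succ, h_prod, Function.update_self, Function.update_of_ne (by lia)]
      ring

lemma IsTempered.neighbor {h : V → ℝ} {x y : V} (hh : IsTempered J f lam Λ {x} h K)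
    (hy : y ∈ Λ) (hxy : J x y ≠ 0) : IsTempered J f lam Λ {y} h (lam * f (J x y) * K) := by
  refine fun z r hz => hh z r ?_
  induction hz with
  | root hz =>
    rw [Finset.mem_singleton.1 hz]
    exact .step (.root (Finset.mem_singleton_self x)) hy hxy
  | step _ hy hJ ih => exact .step ih hy hJ

namespace IsInteraction

lemma one_le_prod (hJ : IsInteraction J f Mf) (m : ℕ) (w : ℕ → V) :
    1 ≤ ∏ i ∈ Finset.range m, f (J (w i) (w (i + 1))) :=
  Finset.one_le_prod fun _ _ => hJ.one_le _

lemma exists_forall_abs_boundaryField_le (hJ : IsInteraction J f Mf) (ξ : V → ℝ) (Λ : Finset V) :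
    ∃ A, 1 ≤ A ∧ ∀ y ∈ Λ, |boundaryField J Λ ξ y| ≤ boundaryWeight J f Λ y * A := by
  have h_nonneg (y : V) : 0 ≤ |boundaryField J Λ ξ y| / boundaryWeight J f Λ y :=
    div_nonneg (abs_nonneg _) (hJ.boundaryWeight_nonneg Λ y)
  refine ⟨1 + ∑ y ∈ Λ, |boundaryField J Λ ξ y| / boundaryWeight J f Λ y,
    le_add_of_nonneg_right (Finset.sum_nonneg fun y _ => h_nonneg y), fun y hy => ?_⟩
  rcases (hJ.boundaryWeight_nonneg Λ y).eq_or_lt with h_zero | h_pos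
  · rw [hJ.boundaryField_eq_zero ξ h_zero.symm, ← h_zero, abs_zero, zero_mul]
  · rw [← div_le_iff₀' h_pos]
    exact (Finset.single_le_sum (fun y _ => h_nonneg y) hy).trans
      (le_add_of_nonneg_left zero_le_one)

/-- The set of admissible constants must be seen to be nonempty, lest the infimum defining
`ARealL` be the junk value `0`. -/
lemma abs_boundaryField_le_of_ARealL_lt (hJ : IsInteraction J f Mf) (hlam : 1 ≤ lam) {ξ : V → ℝ}
    {x : V} (hA : ARealL J f lam ξ 1 x Λ < K) {m : ℕ} {w : ℕ → V} (hw : IsWalk J (Λ : Set V) m w)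
    (hw_zero : w 0 = x) (hw_mem : w m ∈ Λ) :
    |boundaryField J Λ ξ (w m)| ≤ boundaryWeight J f Λ (w m) * (K * lam ^ (m + 1) *
      ∏ i ∈ Finset.range m, f (J (w i) (w (i + 1)))) := by
  obtain ⟨A₀, hA₀, hA₀_bound⟩ := hJ.exists_forall_abs_boundaryField_le ξ Λ
  have h_factor (m : ℕ) (w : ℕ → V) :
      1 ≤ lam ^ (m + 1) * ∏ i ∈ Finset.range m, f (J (w i) (w (i + 1))) :=
    one_le_mul_of_one_le_of_one_le (one_le_pow₀ hlam) (hJ.one_le_prod m w)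
  obtain ⟨A, hA_mem, hA_lt⟩ := exists_lt_of_csInf_lt (by
    refine ⟨A₀, hA₀, fun m w _ _ hwm => ?_⟩
    have h_bound := hA₀_bound (w m) hwm
    refine h_bound.trans
      ((le_mul_of_one_le_right ((abs_nonneg _).trans h_bound) (h_factor m w)).trans_eq ?_)
    change _ = boundaryWeight J f Λ (w m) * 1 * A₀ * _ * _
    ring) hA
  refine (hA_mem.2 m w hw hw_zero hw_mem).trans ?_
  change boundaryWeight J f Λ (w m) * 1 * A * _ * _ ≤ _
  have h_weight := hJ.boundaryWeight_nonneg Λ (w m)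
  have h_factor_nonneg := zero_le_one.trans (h_factor m w)
  calc boundaryWeight J f Λ (w m) * 1 * A * lam ^ (m + 1) *
        ∏ i ∈ Finset.range m, f (J (w i) (w (i + 1)))
      = boundaryWeight J f Λ (w m) *
        (A * (lam ^ (m + 1) * ∏ i ∈ Finset.range m, f (J (w i) (w (i + 1))))) := by ring
    _ ≤ boundaryWeight J f Λ (w m) *
        (K * (lam ^ (m + 1) * ∏ i ∈ Finset.range m, f (J (w i) (w (i + 1))))) := by gcongr
    _ = _ := by ring

lemma isTempered_boundaryField (hJ : IsInteraction J f Mf) (hlam : 1 ≤ lam) {ξ : V → ℝ}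
    (hΔ : Δ ⊆ Λ) (hA : ∀ x ∈ Δ, ARealL J f lam ξ 1 x Λ < K) :
    IsTempered J f lam Λ Δ (boundaryField J Λ ξ) K := by
  intro z r hz
  obtain ⟨m, w, hw, hw_zero, rfl, hwm, rfl⟩ := hz.exists_isWalk hΔ
  refine (hJ.abs_boundaryField_le_of_ARealL_lt hlam (hA _ hw_zero) hw rfl hwm).trans_eq ?_
  ring

end IsInteraction

end Interaction

/-! ### Single-site costs -/

section SingleSite

/-- The measure `ρ` integrates `e^{a u²}` for every real `a`. -/
def HasGaussianMoments (ρ : Measure ℝ) : Prop :=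
  ∀ a : ℝ, ∫⁻ u, ENNReal.ofReal (Real.exp (a * u ^ 2)) ∂ρ ≠ ⊤

/-- The cost `e^{a max(|u|, K)²} / ρ[-M, M]` of resampling the spin `u` from `[-M, M]`. -/
noncomputable def siteWeight (ρ : Measure ℝ) (a K M u : ℝ) : ℝ≥0∞ :=
  ENNReal.ofReal (Real.exp (a * max |u| K ^ 2)) * (ρ {u | |u| ≤ M})⁻¹

/-- The expected cost of discovering a spin above the level `f t * K`, `t` being the strength of
the interaction along which it is discovered. -/
noncomputable def tailWeight (f : ℝ → ℝ) (ρ : Measure ℝ) (a K M t : ℝ) : ℝ≥0∞ :=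
  ∫⁻ u in {u | f t * K < |u|}, siteWeight ρ a K M u ∂ρ

/-- The level `K` is so high that in an exploration above `K`, where spins are resampled from
`[-M, M]`, the children discovered from one vertex cost a factor of at most `2` in total. -/
structure IsBranchingThreshold {V : Type*} (J : V → V → ℝ) (f : ℝ → ℝ) (ρ : Measure ℝ)
    (a M K : ℝ) : Prop where
  nonneg : 0 ≤ M
  le : M ≤ K
  measure_ne_zero : ρ {u | |u| ≤ M} ≠ 0
  prod_le_two : ∀ (x : V) (U : Finset V), (∀ s ∈ U, J x s ≠ 0) →
    ∏ s ∈ U, (1 + 2 * tailWeight f ρ a K M (J x s)) ≤ 2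

variable {ρ : Measure ℝ} {a K M : ℝ} {f : ℝ → ℝ}

lemma measurable_siteWeight : Measurable (siteWeight ρ a K M) := by
  unfold siteWeight
  fun_prop

lemma exists_nat_measure_abs_le_ne_zero (hρ : ρ ≠ 0) : ∃ n : ℕ, ρ {u | |u| ≤ (n : ℝ)} ≠ 0 := by
  obtain ⟨n, hn⟩ := exists_pos_ball (0 : ℝ) hρ
  refine ⟨n, (hn.trans_le (measure_mono fun u hu => ?_)).ne'⟩
  simpa using (mem_ball_zero_iff.1 hu).le

lemma exp_neg_sq_le_mul_abs {δ t : ℝ} (hδ : 0 < δ) (ht : t ≠ 0)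
    (hf : |t| < δ → Real.log |t|⁻¹ ^ (1 / 2 : ℝ) ≤ f t) :
    Real.exp (-(f t) ^ 2) ≤ (1 + δ⁻¹) * |t| := by
  have ht_pos : 0 < |t| := abs_pos.2 ht
  have hδ_inv : 0 < δ⁻¹ := inv_pos.2 hδ
  rcases lt_or_ge |t| δ with h_small | h_large
  · have h_sqrt := hf h_small
    rw [← Real.sqrt_eq_rpow] at h_sqrt
    have h_log : -(f t) ^ 2 ≤ Real.log |t| := by
      have := (Real.sqrt_le_left ((Real.sqrt_nonneg _).trans h_sqrt)).1 h_sqrt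
      rw [Real.log_inv] at this
      linarith
    have h_exp : Real.exp (-(f t) ^ 2) ≤ |t| := (Real.le_log_iff_exp_le ht_pos).1 h_log
    nlinarith
  · have h_exp : Real.exp (-(f t) ^ 2) ≤ 1 := Real.exp_le_one_iff.2 (neg_nonpos.2 (sq_nonneg _))
    have h_one : 1 ≤ δ⁻¹ * |t| := by rwa [inv_mul_eq_div, one_le_div hδ]
    linarith

lemma siteWeight_le_of_lt_abs {t u : ℝ} (hf : 1 ≤ f t) (hK : 1 ≤ K) (hu : f t * K < |u|) :
    siteWeight ρ a K M u ≤ ENNReal.ofReal (Real.exp (1 - K ^ 2) * Real.exp (-(f t) ^ 2)) *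
      (ENNReal.ofReal (Real.exp ((a + 1) * u ^ 2)) * (ρ {u | |u| ≤ M})⁻¹) := by
  have h_max : max |u| K = |u| :=
    max_eq_left ((le_mul_of_one_le_left (zero_le_one.trans hK) hf).trans hu.le)
  have h_sq : (f t) ^ 2 * K ^ 2 ≤ u ^ 2 := by
    rw [← mul_pow, ← sq_abs u]
    gcongr
  rw [siteWeight, h_max, sq_abs, ← mul_assoc, ← ENNReal.ofReal_mul (by positivity), ← Real.exp_add,
    ← Real.exp_add]
  gcongr
  nlinarith [mul_nonneg (sub_nonneg.2 (one_le_pow₀ hf : 1 ≤ f t ^ 2))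
    (sub_nonneg.2 (one_le_pow₀ hK : 1 ≤ K ^ 2))]

lemma tailWeight_le {t : ℝ} (hf : 1 ≤ f t) (hK : 1 ≤ K) :
    tailWeight f ρ a K M t ≤ ENNReal.ofReal (Real.exp (1 - K ^ 2) * Real.exp (-(f t) ^ 2)) *
      ((∫⁻ u, ENNReal.ofReal (Real.exp ((a + 1) * u ^ 2)) ∂ρ) * (ρ {u | |u| ≤ M})⁻¹) := by
  refine (setLIntegral_mono (by fun_prop) fun u hu => siteWeight_le_of_lt_abs hf hK hu).trans
    ((setLIntegral_le_lintegral _ _).trans_eq ?_)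
  rw [lintegral_const_mul _ (by fun_prop), lintegral_mul_const _ (by fun_prop)]

lemma prod_one_add_two_mul_le_two {ι : Type*} {U : Finset ι} {v : ι → ℝ} {T : ι → ℝ≥0∞}
    (hv : ∀ s ∈ U, 0 ≤ v s) (hv_sum : ∑ s ∈ U, v s ≤ 1 / 4)
    (hT : ∀ s ∈ U, T s ≤ ENNReal.ofReal (v s)) : ∏ s ∈ U, (1 + 2 * T s) ≤ 2 := by
  have h_factor (s : ι) (hs : s ∈ U) : 1 + 2 * T s ≤ ENNReal.ofReal (Real.exp (2 * v s)) :=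
    calc 1 + 2 * T s ≤ 1 + 2 * ENNReal.ofReal (v s) := by gcongr; exact hT s hs
      _ = ENNReal.ofReal (2 * v s + 1) := by
        rw [ENNReal.ofReal_add (mul_nonneg zero_le_two (hv s hs)) zero_le_one,
          ENNReal.ofReal_mul zero_le_two, ENNReal.ofReal_one, ENNReal.ofReal_ofNat, add_comm]
      _ ≤ ENNReal.ofReal (Real.exp (2 * v s)) :=
        ENNReal.ofReal_le_ofReal (Real.add_one_le_exp _)
  have h_exp : Real.exp (1 / 2) ≤ 2 := by
    rw [← Real.le_log_iff_exp_le two_pos]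
    linarith [Real.log_two_gt_d9]
  calc ∏ s ∈ U, (1 + 2 * T s) ≤ ∏ s ∈ U, ENNReal.ofReal (Real.exp (2 * v s)) :=
        Finset.prod_le_prod' h_factor
    _ = ENNReal.ofReal (Real.exp (2 * ∑ s ∈ U, v s)) := by
        rw [← ENNReal.ofReal_prod_of_nonneg fun _ _ => (Real.exp_pos _).le, ← Real.exp_sum,
          Finset.mul_sum]
    _ ≤ ENNReal.ofReal 2 := by
        refine ENNReal.ofReal_le_ofReal (le_trans (Real.exp_le_exp.2 ?_) h_exp)
        linarith
    _ = 2 := ENNReal.ofReal_ofNat 2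

lemma exists_eventually_isBranchingThreshold [NeZero ρ] {V : Type*}
    {J : V → V → ℝ} {Mf D : ℝ} (hJ : IsInteraction J f Mf)
    (hf : ∀ t, t ≠ 0 → Real.exp (-(f t) ^ 2) ≤ D * |t|) (hρ : HasGaussianMoments ρ) (a : ℝ) :
    ∃ M, ∀ᶠ K in atTop, IsBranchingThreshold J f ρ a M K := by
  obtain ⟨n, hn⟩ := exists_nat_measure_abs_le_ne_zero (NeZero.ne ρ)
  set C := (∫⁻ u, ENNReal.ofReal (Real.exp ((a + 1) * u ^ 2)) ∂ρ) * (ρ {u | |u| ≤ (n : ℝ)})⁻¹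
  have hC : C ≠ ⊤ := ENNReal.mul_ne_top (hρ _) (ENNReal.inv_ne_top.2 hn)
  have hD : 0 ≤ D := by
    have := (Real.exp_pos _).le.trans (hf 1 one_ne_zero)
    rwa [abs_one, mul_one] at this
  have h_tendsto :
      Tendsto (fun K : ℝ => Real.exp (1 - K ^ 2) * D * C.toReal * Mf) atTop (nhds 0) := by
    have h_exp : Tendsto (fun K : ℝ => Real.exp (1 - K ^ 2)) atTop (nhds 0) :=
      Real.tendsto_exp_atBot.comp (tendsto_atBot_add_const_left _ 1
        (tendsto_neg_atTop_atBot.comp (tendsto_pow_atTop two_ne_zero)))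
    simpa [mul_assoc] using h_exp.mul_const (D * C.toReal * Mf)
  refine ⟨n, ?_⟩
  filter_upwards [eventually_ge_atTop 1, eventually_ge_atTop (n : ℝ),
    h_tendsto.eventually_le_const (by norm_num : (0 : ℝ) < 1 / 4)] with K hK hnK h_quarter
  refine ⟨n.cast_nonneg, hnK, hn, fun x U hU => ?_⟩
  set v : V → ℝ := fun s => Real.exp (1 - K ^ 2) * (D * |J x s|) * C.toReal
  refine prod_one_add_two_mul_le_two (v := v) (fun s _ => by positivity) ?_ fun s hs => ?_
  · calc ∑ s ∈ U, v s = Real.exp (1 - K ^ 2) * D * C.toReal * ∑ s ∈ U, |J x s| := by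
          rw [Finset.mul_sum]
          exact Finset.sum_congr rfl fun s _ => by ring
      _ ≤ Real.exp (1 - K ^ 2) * D * C.toReal * Mf := by
          gcongr
          exact hJ.sum_abs_le x U
      _ ≤ 1 / 4 := h_quarter
  · refine (tailWeight_le (hJ.one_le _) hK).trans ?_
    rw [ENNReal.ofReal_mul (q := C.toReal) (by positivity), ENNReal.ofReal_toReal hC]
    gcongr
    exact hf _ (hU s hs)

end SingleSite

/-! ### Resampling the explored spins -/

section Resampling

variable {V : Type*} {J : V → V → ℝ} {f : ℝ → ℝ} {Mf β lam K : ℝ} {P Λ Δ : Finset V}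

/-- The unnormalized density of the finite-volume measure on `Λ` under the external field `h`. -/
noncomputable def boltzmannWeight (J : V → V → ℝ) (β : ℝ) (Λ : Finset V) (h φ : V → ℝ) : ℝ≥0∞ :=
  ENNReal.ofReal (Real.exp (energy J β Λ h φ))

/-- The infinite product of copies of `ρ` on `ℝ^V`. -/
noncomputable abbrev iidMeasure (V : Type*) (ρ : Measure ℝ) : Measure (V → ℝ) :=
  Measure.infinitePi fun _ => ρ

/-- The event left by an exploration that has revealed the spins of `E` and processed those of
`P`: the spins at `z ∈ E`, truncated below at `K`, have attained the levels `r z`, and every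
neighbour of `P` beyond `E` is small. -/
def explorationEvent (J : V → V → ℝ) (f : ℝ → ℝ) (lam K : ℝ) (Λ P E : Finset V) (r : V → ℝ) :
    Set (V → ℝ) :=
  {φ | (∀ z ∈ E, r z ≤ max |φ z| K) ∧
    ∀ z ∈ P, ∀ u ∈ Λ \ E, J z u ≠ 0 → |φ u| ≤ lam * f (J z u) * max |φ z| K}

lemma measurable_boltzmannWeight (h : V → ℝ) : Measurable (boltzmannWeight J β Λ h) :=
  (Real.measurable_exp.comp (measurable_energy h)).ennreal_ofReal

lemma IsInteraction.sum_abs_mul_add_abs_effectiveField_le (hJ : IsInteraction J f Mf)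
    (hlam : 1 ≤ lam) (hP : P ⊆ Λ) {h φ : V → ℝ} {x : V} {t : ℝ} (ht : 0 ≤ t)
    (hh : |h x| ≤ boundaryWeight J f Λ x * (lam * t))
    (hφ : ∀ y ∈ Λ \ P, J x y ≠ 0 → |φ y| ≤ lam * f (J x y) * t) :
    (∑ y ∈ P, |J x y|) * t + |effectiveField J P Λ h φ x| ≤ lam * Mf * t := by
  have h_inside : (∑ y ∈ P, |J x y|) * t ≤ (∑ y ∈ P, |J x y| * f (J x y)) * (lam * t) := by
    refine mul_le_mul (Finset.sum_le_sum fun y _ => hJ.abs_le_mul x y)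
      (le_mul_of_one_le_left ht hlam) ht (Finset.sum_nonneg fun y _ => hJ.weight_nonneg x y)
  have h_outside : |∑ y ∈ Λ \ P, J x y * φ y| ≤
      (∑ y ∈ Λ \ P, |J x y| * f (J x y)) * (lam * t) := by
    rw [Finset.sum_mul]
    refine (Finset.abs_sum_le_sum_abs _ _).trans (Finset.sum_le_sum fun y hy => ?_)
    by_cases hxy : J x y = 0
    · simp [hxy]
    · rw [abs_mul]
      calc |J x y| * |φ y| ≤ |J x y| * (lam * f (J x y) * t) := by gcongr; exact hφ y hy hxy
        _ = |J x y| * f (J x y) * (lam * t) := by ring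
  have h_abs := abs_add_le (h x) (∑ y ∈ Λ \ P, J x y * φ y)
  calc (∑ y ∈ P, |J x y|) * t + |effectiveField J P Λ h φ x|
      ≤ (∑ y ∈ P, |J x y| * f (J x y)) * (lam * t) + (boundaryWeight J f Λ x * (lam * t) +
          (∑ y ∈ Λ \ P, |J x y| * f (J x y)) * (lam * t)) := by unfold effectiveField; linarith
    _ = (∑ y ∈ Λ, |J x y| * f (J x y) + boundaryWeight J f Λ x) * (lam * t) := by
        rw [← Finset.sum_sdiff hP]
        ring
    _ ≤ Mf * (lam * t) := by
        gcongr
        exact hJ.sum_add_boundaryWeight_le Λ x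
    _ = lam * Mf * t := by ring

lemma IsInteraction.abs_energy_effectiveField_le (hJ : IsInteraction J f Mf) (hβ : 0 ≤ β)
    (hlam : 1 ≤ lam) (hP : P ⊆ Λ) {h φ ψ m : V → ℝ} (hψ : ∀ x ∈ P, |ψ x| ≤ m x)
    (hh : ∀ x ∈ P, |h x| ≤ boundaryWeight J f Λ x * (lam * m x))
    (hφ : ∀ x ∈ P, ∀ y ∈ Λ \ P, J x y ≠ 0 → |φ y| ≤ lam * f (J x y) * m x) :
    |energy J β P (effectiveField J P Λ h φ) ψ| ≤ β * lam * Mf * ∑ x ∈ P, m x ^ 2 := by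
  refine (abs_energy_le hJ.symm hβ hψ).trans ?_
  rw [mul_assoc β, mul_assoc β, Finset.mul_sum _ _ (lam * Mf)]
  refine mul_le_mul_of_nonneg_left (Finset.sum_le_sum fun x hx => ?_) hβ
  have hm : 0 ≤ m x := (abs_nonneg _).trans (hψ x hx)
  have h_sum : 0 ≤ (∑ y ∈ P, |J x y|) * m x :=
    mul_nonneg (Finset.sum_nonneg fun _ _ => abs_nonneg _) hm
  have := hJ.sum_abs_mul_add_abs_effectiveField_le hlam hP hm (hh x hx) (hφ x hx)
  nlinarith

lemma effectiveField_piecewise (h φ ψ : V → ℝ) :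
    effectiveField J P Λ h ((P : Set V).piecewise ψ φ) = effectiveField J P Λ h φ := by
  funext x
  refine congrArg (h x + ·) (Finset.sum_congr rfl fun y hy => ?_)
  rw [Set.piecewise_eq_of_notMem _ _ _ (Finset.mem_sdiff.1 hy).2]

lemma energy_sub_energy_piecewise (hJ : ∀ x y, J x y = J y x) (hP : P ⊆ Λ) (h φ ψ : V → ℝ) :
    energy J β Λ h φ - energy J β Λ h ((P : Set V).piecewise ψ φ) =
      energy J β P (effectiveField J P Λ h φ) φ - energy J β P (effectiveField J P Λ h φ) ψ := by
  have h_inside : energy J β P (effectiveField J P Λ h φ) ((P : Set V).piecewise ψ φ) =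
      energy J β P (effectiveField J P Λ h φ) ψ :=
    dependsOn_energy _ fun x hx => Set.piecewise_eq_of_mem _ _ _ hx
  have h_outside : energy J β (Λ \ P) h ((P : Set V).piecewise ψ φ) = energy J β (Λ \ P) h φ :=
    dependsOn_energy _ fun x hx => Set.piecewise_eq_of_notMem _ _ _
      (Finset.mem_sdiff.1 (Finset.mem_coe.1 hx)).2
  rw [energy_eq_add_sdiff hJ hP h φ, energy_eq_add_sdiff hJ hP h ((P : Set V).piecewise ψ φ),
    effectiveField_piecewise, h_inside, h_outside]
  ring

variable {h φ r : V → ℝ} {ρ : Measure ℝ} {M : ℝ}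

lemma IsInteraction.boltzmannWeight_le_prod_mul_piecewise (hJ : IsInteraction J f Mf) (hβ : 0 ≤ β)
    (hlam : 1 ≤ lam) (hP : P ⊆ Λ) (hh : IsTempered J f lam Λ Δ h K)
    (hr : ∀ z ∈ P, ReachesLevel J f lam Λ Δ K z (r z))
    (hφ : φ ∈ explorationEvent J f lam K Λ P P r) {ψ : V → ℝ} (hψ : ∀ z ∈ P, |ψ z| ≤ K) :
    boltzmannWeight J β Λ h φ ≤
      (∏ z ∈ P, ENNReal.ofReal (Real.exp (2 * β * Mf * lam * max |φ z| K ^ 2))) *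
        boltzmannWeight J β Λ h ((P : Set V).piecewise ψ φ) := by
  have h_field (x : V) (hx : x ∈ P) :
      |h x| ≤ boundaryWeight J f Λ x * (lam * max |φ x| K) := by
    have := hJ.boundaryWeight_nonneg Λ x
    refine (hh x _ (hr x hx)).trans ?_
    gcongr
    exact hφ.1 x hx
  have h_old := hJ.abs_energy_effectiveField_le hβ hlam hP (fun x _ => le_max_left |φ x| K)
    h_field hφ.2
  have h_new := hJ.abs_energy_effectiveField_le hβ hlam hP
    (fun x hx => (hψ x hx).trans (le_max_right |φ x| K)) h_field hφ.2
  have h_diff := energy_sub_energy_piecewise (β := β) hJ.symm hP h φ ψ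
  rw [boltzmannWeight, boltzmannWeight,
    ← ENNReal.ofReal_prod_of_nonneg fun _ _ => (Real.exp_pos _).le, ← Real.exp_sum,
    ← ENNReal.ofReal_mul (Real.exp_pos _).le, ← Real.exp_add, ← Finset.mul_sum]
  gcongr
  linarith [abs_le.1 h_old, abs_le.1 h_new]

lemma IsInteraction.boltzmannWeight_le_prod_siteWeight_mul_lintegral [IsProbabilityMeasure ρ]
    (hJ : IsInteraction J f Mf) (hβ : 0 ≤ β) (hlam : 1 ≤ lam) (hMK : M ≤ K)
    (hM : ρ {u | |u| ≤ M} ≠ 0) (hP : P ⊆ Λ) (hh : IsTempered J f lam Λ Δ h K)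
    (hr : ∀ z ∈ P, ReachesLevel J f lam Λ Δ K z (r z))
    (hφ : φ ∈ explorationEvent J f lam K Λ P P r) :
    boltzmannWeight J β Λ h φ ≤ (∏ z ∈ P, siteWeight ρ (2 * β * Mf * lam) K M (φ z)) *
      ∫⁻ ψ, boltzmannWeight J β Λ h ((P : Set V).piecewise ψ φ) ∂iidMeasure V ρ := by
  set B : Set ℝ := {u | |u| ≤ M}
  have hB : MeasurableSet B := measurableSet_le (by fun_prop) (by fun_prop)
  set e := ∏ z ∈ P, ENNReal.ofReal (Real.exp (2 * β * Mf * lam * max |φ z| K ^ 2))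
  have he : e ≠ ⊤ := ENNReal.prod_ne_top fun _ _ => ENNReal.ofReal_ne_top
  have h_box : ∫⁻ ψ : V → ℝ, ∏ z ∈ P, B.indicator 1 (ψ z) ∂iidMeasure V ρ = ρ B ^ P.card := by
    rw [lintegral_prod_eval_infinitePi _ P fun _ => measurable_one.indicator hB,
      lintegral_indicator_one hB, Finset.prod_const]
  have h_resample : ρ B ^ P.card * boltzmannWeight J β Λ h φ ≤
      e * ∫⁻ ψ, boltzmannWeight J β Λ h ((P : Set V).piecewise ψ φ) ∂iidMeasure V ρ := by
    rw [← h_box, ← lintegral_mul_const' (boltzmannWeight J β Λ h φ) _ ENNReal.ofReal_ne_top,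
      ← lintegral_const_mul' _ _ he]
    refine lintegral_mono fun ψ => ?_
    by_cases hψ : ∀ z ∈ P, ψ z ∈ B
    · rw [Finset.prod_eq_one fun z hz => Set.indicator_of_mem (hψ z hz) _, one_mul]
      exact hJ.boltzmannWeight_le_prod_mul_piecewise hβ hlam hP hh hr hφ
        fun z hz => (hψ z hz).trans hMK
    · push Not at hψ
      obtain ⟨z, hz, hψz⟩ := hψ
      rw [Finset.prod_eq_zero hz (Set.indicator_of_notMem hψz _), zero_mul]
      exact zero_le
  simp only [siteWeight, Finset.prod_mul_distrib, Finset.prod_const]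
  rwa [mul_right_comm, ← ENNReal.inv_pow, ← div_eq_mul_inv,
    ENNReal.le_div_iff_mul_le (.inl (pow_ne_zero _ hM))
      (.inl (ENNReal.pow_ne_top (measure_ne_top _ _))), mul_comm]

end Resampling

/-! ### Exploration -/

section Exploration

variable {V : Type*} {J : V → V → ℝ} {f : ℝ → ℝ} {Mf β lam K M a : ℝ} {P E S Λ Δ : Finset V}
  {h r : V → ℝ} {ρ : Measure ℝ} {x : V}

/-- The levels `r` of an exploration, extended to the children `S` discovered from `x`. -/
noncomputable def childLevel (J : V → V → ℝ) (f : ℝ → ℝ) (lam : ℝ) (r : V → ℝ) (x : V)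
    (S : Finset V) (z : V) : ℝ :=
  if z ∈ S then lam * f (J x z) * r x else r z

lemma measurableSet_explorationEvent :
    MeasurableSet (explorationEvent J f lam K Λ P E r) := by
  simp only [explorationEvent, Set.ofPred_and, Set.ofPred_forall]
  exact .inter
    (Finset.measurableSet_biInter _ fun z _ => measurableSet_le (by fun_prop) (by fun_prop))
    (Finset.measurableSet_biInter _ fun z _ => Finset.measurableSet_biInter _ fun u _ =>
      .iInter fun _ => measurableSet_le (by fun_prop) (by fun_prop))

lemma measurableSet_lt_abs (c : ℝ) : MeasurableSet {u : ℝ | c < |u|} :=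
  measurableSet_lt (by fun_prop) (by fun_prop)

lemma ReachesLevel.childLevel (hE : ∀ z ∈ E, ReachesLevel J f lam Λ Δ K z (r z)) (hx : x ∈ E)
    (hS : S ⊆ {s ∈ Λ \ E | J x s ≠ 0}) {z : V} (hz : z ∈ E ∪ S) :
    ReachesLevel J f lam Λ Δ K z (childLevel J f lam r x S z) := by
  unfold _root_.childLevel
  split_ifs with hzS
  · obtain ⟨hzΛ, hJ⟩ := Finset.mem_filter.1 (hS hzS)
    exact .step (hE x hx) (Finset.mem_sdiff.1 hzΛ).1 hJ
  · exact hE z ((Finset.mem_union.1 hz).resolve_right hzS)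

lemma IsInteraction.exists_children_mem_explorationEvent (hJ : IsInteraction J f Mf)
    (hlam : 1 ≤ lam) (hx : x ∈ E) {φ : V → ℝ}
    (hφ : φ ∈ explorationEvent J f lam K Λ P E r) :
    ∃ S ⊆ {s ∈ Λ \ E | J x s ≠ 0},
      φ ∈ explorationEvent J f lam K Λ (insert x P) (E ∪ S) (childLevel J f lam r x S) ∧
        ∀ s ∈ S, f (J x s) * K < |φ s| := by
  set S := {s ∈ Λ \ E | J x s ≠ 0 ∧ lam * f (J x s) * max |φ x| K < |φ s|}
  have hS_large (s : V) (hs : s ∈ S) : lam * f (J x s) * max |φ x| K < |φ s| :=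
    (Finset.mem_filter.1 hs).2.2
  refine ⟨S, Finset.monotone_filter_right _ fun s _ hs => hs.1, ⟨fun z hz => ?_, ?_⟩,
    fun s hs => lt_of_le_of_lt ?_ (hS_large s hs)⟩
  · unfold childLevel
    split_ifs with hzS
    · have := hJ.pos (J x z)
      refine le_trans ?_ ((hS_large z hzS).le.trans (le_max_left _ _))
      gcongr
      exact hφ.1 x hx
    · exact hφ.1 z ((Finset.mem_union.1 hz).resolve_right hzS)
  · intro z hz u hu hzu
    rw [← Finset.sup_eq_union, ← sdiff_sdiff, Finset.mem_sdiff] at hu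
    rcases Finset.mem_insert.1 hz with rfl | hzP
    · by_contra! h_large
      exact hu.2 (Finset.mem_filter.2 ⟨hu.1, hzu, h_large⟩)
    · exact hφ.2 z hzP u hu.1 hzu
  · have := hJ.pos (J x s)
    rw [mul_assoc lam]
    refine le_trans ?_ (le_mul_of_one_le_left (by positivity) hlam)
    gcongr
    exact le_max_right _ _

lemma IsInteraction.setLIntegral_explorationEvent_le_sum (hJ : IsInteraction J f Mf)
    (hlam : 1 ≤ lam) (hx : x ∈ E) {F : (V → ℝ) → ℝ≥0∞} (hF : Measurable F)
    (μ : Measure (V → ℝ)) :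
    ∫⁻ φ in explorationEvent J f lam K Λ P E r, F φ ∂μ ≤
      ∑ S ∈ {s ∈ Λ \ E | J x s ≠ 0}.powerset,
        ∫⁻ φ in explorationEvent J f lam K Λ (insert x P) (E ∪ S) (childLevel J f lam r x S),
          (∏ s ∈ S, {u | f (J x s) * K < |u|}.indicator 1 (φ s)) * F φ ∂μ := by
  have h_indicator (S : Finset V) : Measurable fun φ : V → ℝ =>
      ∏ s ∈ S, {u | f (J x s) * K < |u|}.indicator (1 : ℝ → ℝ≥0∞) (φ s) :=
    measurable_prod_eval S fun s => measurable_one.indicator (measurableSet_lt_abs _)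
  set D : Finset V → (V → ℝ) → ℝ≥0∞ := fun S =>
    (explorationEvent J f lam K Λ (insert x P) (E ∪ S) (childLevel J f lam r x S)).indicator
      fun φ => (∏ s ∈ S, {u | f (J x s) * K < |u|}.indicator 1 (φ s)) * F φ
  have hD (S : Finset V) : Measurable (D S) :=
    ((h_indicator S).mul hF).indicator measurableSet_explorationEvent
  simp_rw [← lintegral_indicator measurableSet_explorationEvent]
  change _ ≤ ∑ S ∈ {s ∈ Λ \ E | J x s ≠ 0}.powerset, ∫⁻ φ, D S φ ∂μ
  rw [← lintegral_finsetSum _ fun S _ => hD S]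
  refine lintegral_mono fun φ =>
    Set.indicator_apply_le' (fun hφ => ?_) fun _ => zero_le
  obtain ⟨S, hS, hφS, hS_large⟩ := hJ.exists_children_mem_explorationEvent hlam hx hφ
  refine le_trans (le_of_eq ?_)
    (Finset.single_le_sum (fun _ _ => zero_le) (Finset.mem_powerset.2 hS))
  simp only [D, Set.indicator_of_mem hφS]
  rw [Finset.prod_eq_one fun s hs =>
    Set.indicator_of_mem (s := {u | f (J x s) * K < |u|}) (hS_large s hs) _, one_mul]

lemma lintegral_prod_indicator_mul_prod_siteWeight [IsProbabilityMeasure ρ] (hES : Disjoint E S)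
    {G : (V → ℝ) → ℝ≥0∞} (hG : Measurable G) (hGE : DependsOn G E) :
    ∫⁻ φ, ((∏ s ∈ S, {u | f (J x s) * K < |u|}.indicator 1 (φ s)) * G φ) *
        ∏ z ∈ E ∪ S, siteWeight ρ a K M (φ z) ∂iidMeasure V ρ =
      (∫⁻ φ, G φ * ∏ z ∈ E, siteWeight ρ a K M (φ z) ∂iidMeasure V ρ) *
        ∏ s ∈ S, tailWeight f ρ a K M (J x s) := by
  set T : V → ℝ → ℝ≥0∞ := fun s => {u | f (J x s) * K < |u|}.indicator (siteWeight ρ a K M)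
  have hT (s : V) : Measurable (T s) :=
    measurable_siteWeight.indicator (measurableSet_lt_abs _)
  have h_split (φ : V → ℝ) :
      ((∏ s ∈ S, {u | f (J x s) * K < |u|}.indicator 1 (φ s)) * G φ) *
        ∏ z ∈ E ∪ S, siteWeight ρ a K M (φ z) =
      (G φ * ∏ z ∈ E, siteWeight ρ a K M (φ z)) * ∏ s ∈ S, T s (φ s) := by
    have hT_eq : ∏ s ∈ S, T s (φ s) =
        (∏ s ∈ S, {u | f (J x s) * K < |u|}.indicator 1 (φ s)) *
          ∏ s ∈ S, siteWeight ρ a K M (φ s) := by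
      rw [← Finset.prod_mul_distrib]
      exact Finset.prod_congr rfl fun s _ => by simp [T, Set.indicator_apply]
    rw [Finset.prod_union hES, hT_eq]
    ring
  have hGE' : DependsOn (fun φ : V → ℝ => G φ * ∏ z ∈ E, siteWeight ρ a K M (φ z)) E :=
    fun φ ψ hφψ => congrArg₂ (· * ·) (hGE hφψ) (dependsOn_prod_eval E _ hφψ)
  simp_rw [h_split]
  rw [lintegral_mul_infinitePi_of_dependsOn _ E
      (F := fun φ => G φ * ∏ z ∈ E, siteWeight ρ a K M (φ z)) (G := fun φ => ∏ s ∈ S, T s (φ s))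
      (hG.mul (measurable_prod_eval E fun _ => measurable_siteWeight)) (measurable_prod_eval S hT)
      hGE' ((dependsOn_prod_eval S T).mono
        (Set.subset_compl_iff_disjoint_left.2 (Finset.disjoint_coe.2 hES))),
    lintegral_prod_eval_infinitePi _ S hT]
  refine congrArg _ (Finset.prod_congr rfl fun s _ => ?_)
  rw [tailWeight, lintegral_indicator (measurableSet_lt_abs _)]

/-- The bound propagated backwards along an exploration: on its event, the marginal on the
revealed vertices `E` has density at most `∏ z ∈ E, siteWeight …`, up to a factor `2` for each
vertex that is not processed yet. -/
def HasExplorationBound (J : V → V → ℝ) (f : ℝ → ℝ) (β lam : ℝ) (ρ : Measure ℝ) (a M K : ℝ)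
    (Λ : Finset V) (h : V → ℝ) (P E : Finset V) (r : V → ℝ) : Prop :=
  ∀ G : (V → ℝ) → ℝ≥0∞, Measurable G → DependsOn G E →
    ∫⁻ φ in explorationEvent J f lam K Λ P E r, G φ * boltzmannWeight J β Λ h φ ∂iidMeasure V ρ ≤
      (∫⁻ φ, boltzmannWeight J β Λ h φ ∂iidMeasure V ρ) * 2 ^ (E \ P).card *
        ∫⁻ φ, G φ * ∏ z ∈ E, siteWeight ρ a K M (φ z) ∂iidMeasure V ρ

lemma IsInteraction.hasExplorationBound_self [IsProbabilityMeasure ρ]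
    (hJ : IsInteraction J f Mf) (hβ : 0 ≤ β) (hlam : 1 ≤ lam) (hMK : M ≤ K)
    (hM : ρ {u | |u| ≤ M} ≠ 0) (hP : P ⊆ Λ) (hh : IsTempered J f lam Λ Δ h K)
    (hr : ∀ z ∈ P, ReachesLevel J f lam Λ Δ K z (r z)) :
    HasExplorationBound J f β lam ρ (2 * β * Mf * lam) M K Λ h P P r := by
  intro G hG hGP
  rw [Finset.sdiff_self, Finset.card_empty, pow_zero, mul_one]
  set W := boltzmannWeight J β Λ h
  have hW : Measurable W := measurable_boltzmannWeight h
  set H : (V → ℝ) → ℝ≥0∞ :=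
    fun φ => G φ * ∏ z ∈ P, siteWeight ρ (2 * β * Mf * lam) K M (φ z) with hH
  have hH_meas : Measurable H := hG.mul (measurable_prod_eval P fun _ => measurable_siteWeight)
  have hHP : DependsOn H P :=
    fun φ ψ hφψ => congrArg₂ (· * ·) (hGP hφψ) (dependsOn_prod_eval P _ hφψ)
  set L : (V → ℝ) → ℝ≥0∞ := fun φ => ∫⁻ ψ, W ((P : Set V).piecewise ψ φ) ∂iidMeasure V ρ
  have hL : Measurable L := (hW.comp (measurable_piecewise_pi (P : Set V))).lintegral_prod_left'
  have hLP : DependsOn L (P : Set V)ᶜ := fun φ φ' hφ => by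
    have h_piecewise (ψ : V → ℝ) : (P : Set V).piecewise ψ φ = (P : Set V).piecewise ψ φ' := by
      funext z
      by_cases hz : z ∈ (P : Set V)
      · simp only [Set.piecewise_eq_of_mem _ _ _ hz]
      · simp only [Set.piecewise_eq_of_notMem _ _ _ hz, hφ z hz]
    simp only [L, h_piecewise]
  calc ∫⁻ φ in explorationEvent J f lam K Λ P P r, G φ * W φ ∂iidMeasure V ρ
      ≤ ∫⁻ φ in explorationEvent J f lam K Λ P P r, H φ * L φ ∂iidMeasure V ρ := by
        refine setLIntegral_mono (hH_meas.mul hL) fun φ hφ => ?_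
        rw [hH, mul_assoc]
        gcongr
        exact hJ.boltzmannWeight_le_prod_siteWeight_mul_lintegral hβ hlam hMK hM hP hh hr hφ
    _ ≤ ∫⁻ φ, H φ * L φ ∂iidMeasure V ρ := setLIntegral_le_lintegral _ _
    _ = (∫⁻ φ, W φ ∂iidMeasure V ρ) * ∫⁻ φ, H φ ∂iidMeasure V ρ := by
        rw [lintegral_mul_infinitePi_of_dependsOn _ (P : Set V) hH_meas hL hHP hLP, mul_comm,
          ← lintegral_infinitePi_eq_lintegral_piecewise _ (P : Set V) hW]

lemma card_union_sdiff_insert (hES : Disjoint E S) (hxE : x ∈ E) (hxP : x ∉ P) (hPE : P ⊆ E) :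
    ((E ∪ S) \ insert x P).card + 1 = (E \ P).card + S.card := by
  have h_insert : insert x P ⊆ E := Finset.insert_subset hxE hPE
  have := Finset.card_le_card h_insert
  rw [Finset.card_sdiff_of_subset (h_insert.trans Finset.subset_union_left),
    Finset.card_sdiff_of_subset hPE, Finset.card_union_of_disjoint hES,
    Finset.card_insert_of_notMem hxP] at *
  lia

lemma IsInteraction.setLIntegral_explorationEvent_le_mul_two (hJ : IsInteraction J f Mf)
    (hlam : 1 ≤ lam) (hK : IsBranchingThreshold J f ρ a M K) (hx : x ∈ E)
    {F : (V → ℝ) → ℝ≥0∞} (hF : Measurable F) (μ : Measure (V → ℝ)) {C : ℝ≥0∞}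
    (h_child : ∀ S ⊆ {s ∈ Λ \ E | J x s ≠ 0},
      ∫⁻ φ in explorationEvent J f lam K Λ (insert x P) (E ∪ S) (childLevel J f lam r x S),
        (∏ s ∈ S, {u | f (J x s) * K < |u|}.indicator 1 (φ s)) * F φ ∂μ ≤
          C * ∏ s ∈ S, 2 * tailWeight f ρ a K M (J x s)) :
    ∫⁻ φ in explorationEvent J f lam K Λ P E r, F φ ∂μ ≤ C * 2 := by
  set U := {s ∈ Λ \ E | J x s ≠ 0}
  calc ∫⁻ φ in explorationEvent J f lam K Λ P E r, F φ ∂μ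
      ≤ ∑ S ∈ U.powerset, C * ∏ s ∈ S, 2 * tailWeight f ρ a K M (J x s) :=
        (hJ.setLIntegral_explorationEvent_le_sum hlam hx hF μ).trans
          (Finset.sum_le_sum fun S hS => h_child S (Finset.mem_powerset.1 hS))
    _ = C * ∏ s ∈ U, (1 + 2 * tailWeight f ρ a K M (J x s)) := by
        rw [← Finset.mul_sum, Finset.prod_one_add]
    _ ≤ C * 2 := by
        gcongr
        exact hK.prod_le_two x U fun s hs => (Finset.mem_filter.1 hs).2

lemma HasExplorationBound.of_children [IsProbabilityMeasure ρ] (hJ : IsInteraction J f Mf)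
    (hlam : 1 ≤ lam) (hK : IsBranchingThreshold J f ρ a M K) (hPE : P ⊆ E) (hxE : x ∈ E)
    (hxP : x ∉ P)
    (h_child : ∀ S ⊆ {s ∈ Λ \ E | J x s ≠ 0}, HasExplorationBound J f β lam ρ a M K Λ h
      (insert x P) (E ∪ S) (childLevel J f lam r x S)) :
    HasExplorationBound J f β lam ρ a M K Λ h P E r := by
  intro G hG hGE
  set W := boltzmannWeight J β Λ h
  set Z := ∫⁻ φ, W φ ∂iidMeasure V ρ
  set I := ∫⁻ φ, G φ * ∏ z ∈ E, siteWeight ρ a K M (φ z) ∂iidMeasure V ρ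
  obtain ⟨d, hd⟩ := Nat.exists_eq_succ_of_ne_zero
    (Finset.card_ne_zero_of_mem (Finset.mem_sdiff.2 ⟨hxE, hxP⟩))
  suffices ∀ S ⊆ {s ∈ Λ \ E | J x s ≠ 0},
      ∫⁻ φ in explorationEvent J f lam K Λ (insert x P) (E ∪ S) (childLevel J f lam r x S),
        (∏ s ∈ S, {u | f (J x s) * K < |u|}.indicator 1 (φ s)) * (G φ * W φ) ∂iidMeasure V ρ ≤
          Z * 2 ^ d * I * ∏ s ∈ S, 2 * tailWeight f ρ a K M (J x s) from
    (hJ.setLIntegral_explorationEvent_le_mul_two hlam hK hxE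
      (hG.mul (measurable_boltzmannWeight h)) _ this).trans_eq (by rw [hd, pow_succ]; ring)
  intro S hS
  have hES : Disjoint E S :=
    Finset.disjoint_sdiff.mono_right (hS.trans (Finset.filter_subset _ _))
  have h_card : ((E ∪ S) \ insert x P).card = d + S.card := by
    have := card_union_sdiff_insert hES hxE hxP hPE
    lia
  set Y : (V → ℝ) → ℝ≥0∞ := fun φ =>
    (∏ s ∈ S, {u | f (J x s) * K < |u|}.indicator 1 (φ s)) * G φ
  have hY : Measurable Y := (measurable_prod_eval S fun _ =>
    measurable_one.indicator (measurableSet_lt_abs _)).mul hG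
  have hYE : DependsOn Y (E ∪ S : Finset V) := fun φ ψ hφψ => congrArg₂ (· * ·)
    (dependsOn_prod_eval S _ fun z hz => hφψ z (Finset.mem_union_right _ hz))
    (hGE fun z hz => hφψ z (Finset.mem_union_left _ hz))
  simp only [← mul_assoc (∏ _ ∈ S, Set.indicator _ _ _)]
  refine (h_child S hS Y hY hYE).trans_eq ?_
  rw [lintegral_prod_indicator_mul_prod_siteWeight hES hG hGE, h_card, pow_add,
    Finset.prod_mul_distrib, Finset.prod_const]
  ring

lemma IsInteraction.hasExplorationBound [IsProbabilityMeasure ρ]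
    (hJ : IsInteraction J f Mf) (hβ : 0 ≤ β) (hlam : 1 ≤ lam)
    (hK : IsBranchingThreshold J f ρ (2 * β * Mf * lam) M K) (hh : IsTempered J f lam Λ Δ h K)
    (hPE : P ⊆ E) (hE : E ⊆ Λ) (hr : ∀ z ∈ E, ReachesLevel J f lam Λ Δ K z (r z)) :
    HasExplorationBound J f β lam ρ (2 * β * Mf * lam) M K Λ h P E r := by
  induction hn : (Λ \ P).card using Nat.strong_induction_on generalizing P E r with
  | _ n ih =>
  obtain rfl | ⟨x, hxE, hxP⟩ := hPE.eq_or_ssubset.imp_right Finset.exists_of_ssubset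
  · exact hJ.hasExplorationBound_self hβ hlam hK.le hK.measure_ne_zero hE hh hr
  refine .of_children hJ hlam hK hPE hxE hxP fun S hS => ?_
  have hSΛ : S ⊆ Λ := (hS.trans (Finset.filter_subset _ _)).trans Finset.sdiff_subset
  have h_lt : (Λ \ insert x P).card < n := by
    rw [← hn, Finset.sdiff_insert]
    exact Finset.card_erase_lt_of_mem (Finset.mem_sdiff.2 ⟨hE hxE, hxP⟩)
  exact ih _ h_lt
    (Finset.insert_subset (Finset.mem_union_left _ hxE) (hPE.trans Finset.subset_union_left))
    (Finset.union_subset hE hSΛ) (fun z hz => ReachesLevel.childLevel hr hxE hS hz) rfl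

lemma IsInteraction.lintegral_mul_boltzmannWeight_le [IsProbabilityMeasure ρ]
    (hJ : IsInteraction J f Mf) (hβ : 0 ≤ β) (hlam : 1 ≤ lam)
    (hK : IsBranchingThreshold J f ρ (2 * β * Mf * lam) M K) (hh : IsTempered J f lam Λ Δ h K)
    (hΔ : Δ ⊆ Λ) {G : (V → ℝ) → ℝ≥0∞} (hG : Measurable G) (hGΔ : DependsOn G Δ) :
    ∫⁻ φ, G φ * boltzmannWeight J β Λ h φ ∂iidMeasure V ρ ≤
      (∫⁻ φ, boltzmannWeight J β Λ h φ ∂iidMeasure V ρ) * 2 ^ Δ.card *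
        ∫⁻ φ, G φ * ∏ z ∈ Δ, siteWeight ρ (2 * β * Mf * lam) K M (φ z) ∂iidMeasure V ρ := by
  have h_univ : explorationEvent J f lam K Λ ∅ Δ (fun _ => K) = Set.univ :=
    Set.eq_univ_of_forall fun φ => ⟨fun z _ => le_max_right _ _, by simp⟩
  have h_bound := hJ.hasExplorationBound hβ hlam hK hh (Finset.empty_subset Δ) hΔ
    (fun _ hz => .root hz) G hG hGΔ
  rwa [h_univ, setLIntegral_univ, Finset.sdiff_empty] at h_bound

end Exploration

/-! ### Finite-volume measures -/

lemma withDensity_map_eq_map_withDensity {α β : Type*} [MeasurableSpace α] [MeasurableSpace β]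
    (μ : Measure α) {g : α → β} (hg : Measurable g) {F : β → ℝ≥0∞} (hF : Measurable F) :
    (μ.map g).withDensity F = (μ.withDensity (F ∘ g)).map g := by
  ext s hs
  rw [Measure.map_apply hg hs, withDensity_apply _ hs, withDensity_apply _ (hg hs),
    setLIntegral_map hs hF hg]
  rfl

lemma indicator_univ_pi_prod {ι : Type*} [Fintype ι] {X : ι → Type*} (s : ∀ i, Set (X i))
    (g : ∀ i, X i → ℝ≥0∞) (x : ∀ i, X i) :
    (Set.univ.pi s).indicator (fun x => ∏ i, g i (x i)) x = ∏ i, (s i).indicator (g i) (x i) := by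
  by_cases hx : x ∈ Set.univ.pi s
  · rw [Set.indicator_of_mem hx]
    exact Finset.prod_congr rfl fun i _ => (Set.indicator_of_mem (hx i trivial) _).symm
  · rw [Set.indicator_of_notMem hx]
    obtain ⟨i, hi⟩ : ∃ i, x i ∉ s i := by simpa using hx
    exact (Finset.prod_eq_zero (Finset.mem_univ i) (Set.indicator_of_notMem hi _)).symm

lemma pi_withDensity {ι : Type*} [Fintype ι] {X : ι → Type*} [∀ i, MeasurableSpace (X i)]
    (μ : ∀ i, Measure (X i)) [∀ i, IsProbabilityMeasure (μ i)] {g : ∀ i, X i → ℝ≥0∞}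
    (hg : ∀ i, Measurable (g i)) [∀ i, SigmaFinite ((μ i).withDensity (g i))] :
    Measure.pi (fun i => (μ i).withDensity (g i)) =
      (Measure.pi μ).withDensity fun x => ∏ i, g i (x i) := by
  refine Measure.pi_eq fun s hs => ?_
  rw [withDensity_apply _ (.univ_pi hs), ← lintegral_indicator (.univ_pi hs)]
  simp_rw [indicator_univ_pi_prod]
  rw [← Measure.infinitePi_eq_pi, lintegral_prod_eval_infinitePi μ Finset.univ
    (g := fun i => (s i).indicator (g i)) fun i => (hg i).indicator (hs i)]
  exact Finset.prod_congr rfl fun i _ => by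
    rw [withDensity_apply _ (hs i), lintegral_indicator (hs i)]

section FieldGibbs

variable {V : Type*} {J : V → V → ℝ} {f : ℝ → ℝ} {Mf β lam a c K M R : ℝ} {ρ : Measure ℝ}
  {Λ Δ : Finset V} {h : V → ℝ}

/-- The partition function of the finite-volume measure on `Λ` under the external field `h`. -/
noncomputable def partitionFunction (J : V → V → ℝ) (β : ℝ) (ρ : Measure ℝ) (Λ : Finset V)
    (h : V → ℝ) : ℝ≥0∞ :=
  ∫⁻ φ, boltzmannWeight J β Λ h φ ∂iidMeasure V ρ

/-- The finite-volume measure on `Λ` under the external field `h`. It is realized on `ℝ^V`, the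
spins outside `Λ` being independent samples of `ρ`, so that all volumes share one space. -/
noncomputable def fieldGibbs (J : V → V → ℝ) (β : ℝ) (ρ : Measure ℝ) (Λ : Finset V)
    (h : V → ℝ) : Measure (V → ℝ) :=
  (partitionFunction J β ρ Λ h)⁻¹ • (iidMeasure V ρ).withDensity (boltzmannWeight J β Λ h)

/-- A product function that dominates the Boltzmann weights on `Λ` for all bounded fields. -/
noncomputable def gaussianEnvelope (c : ℝ) (Λ : Finset V) (φ : V → ℝ) : ℝ≥0∞ :=
  ∏ z ∈ Λ, ENNReal.ofReal (Real.exp (c * (1 + φ z ^ 2)))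

lemma lintegral_gaussianEnvelope_ne_top [IsProbabilityMeasure ρ] (hρ : HasGaussianMoments ρ)
    (c : ℝ) (Λ : Finset V) : ∫⁻ φ, gaussianEnvelope c Λ φ ∂iidMeasure V ρ ≠ ⊤ := by
  unfold gaussianEnvelope
  rw [lintegral_prod_eval_infinitePi _ Λ
    (g := fun _ u => ENNReal.ofReal (Real.exp (c * (1 + u ^ 2)))) fun _ => by fun_prop]
  refine ENNReal.prod_ne_top fun _ _ => ?_
  simp_rw [mul_add, mul_one, Real.exp_add, ENNReal.ofReal_mul (Real.exp_pos c).le]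
  rw [lintegral_const_mul _ (by fun_prop)]
  exact ENNReal.mul_ne_top ENNReal.ofReal_ne_top (hρ c)

lemma IsInteraction.boltzmannWeight_le_gaussianEnvelope (hJ : IsInteraction J f Mf) (hβ : 0 ≤ β)
    (hh : ∀ x ∈ Λ, |h x| ≤ R) (φ : V → ℝ) :
    boltzmannWeight J β Λ h φ ≤ gaussianEnvelope (β * (Mf + R)) Λ φ := by
  rw [boltzmannWeight, gaussianEnvelope,
    ← ENNReal.ofReal_prod_of_nonneg fun _ _ => (Real.exp_pos _).le, ← Real.exp_sum]
  gcongr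
  refine (le_abs_self _).trans ((abs_energy_le hJ.symm hβ fun x _ => le_rfl).trans ?_)
  rw [Finset.mul_sum]
  refine Finset.sum_le_sum fun x hx => ?_
  rw [mul_assoc β]
  refine mul_le_mul_of_nonneg_left ?_ hβ
  have h_sum : ∑ y ∈ Λ, |J x y| ≤ Mf := hJ.sum_abs_le x Λ
  have h_sum_nonneg : 0 ≤ ∑ y ∈ Λ, |J x y| := Finset.sum_nonneg fun _ _ => abs_nonneg _
  have h_pair : 1 / 2 * (∑ y ∈ Λ, |J x y|) * |φ x| ^ 2 ≤ Mf * (1 + φ x ^ 2) := by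
    rw [sq_abs]
    nlinarith [sq_nonneg (φ x)]
  have h_field : |h x| * |φ x| ≤ R * (1 + φ x ^ 2) := by
    refine mul_le_mul (hh x hx) ?_ (abs_nonneg _) ((abs_nonneg _).trans (hh x hx))
    rw [← sq_abs (φ x)]
    nlinarith [sq_nonneg (|φ x| - 1)]
  linarith

lemma partitionFunction_ne_top [IsProbabilityMeasure ρ] (hJ : IsInteraction J f Mf) (hβ : 0 ≤ β)
    (hρ : HasGaussianMoments ρ) (Λ : Finset V) (h : V → ℝ) :
    partitionFunction J β ρ Λ h ≠ ⊤ :=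
  ne_top_of_le_ne_top (lintegral_gaussianEnvelope_ne_top hρ _ Λ) (lintegral_mono
    (hJ.boltzmannWeight_le_gaussianEnvelope hβ fun _ hx =>
      Finset.single_le_sum (f := fun x => |h x|) (fun _ _ => abs_nonneg _) hx))

lemma partitionFunction_ne_zero [IsProbabilityMeasure ρ] (Λ : Finset V) (h : V → ℝ) :
    partitionFunction J β ρ Λ h ≠ 0 := by
  refine (lintegral_pos_iff_support (measurable_boltzmannWeight h)).2 ?_ |>.ne'
  have h_support : Function.support (boltzmannWeight J β Λ h) = Set.univ :=
    Set.eq_univ_of_forall fun φ => (ENNReal.ofReal_pos.2 (Real.exp_pos _)).ne'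
  simp [h_support]

lemma isProbabilityMeasure_fieldGibbs [IsProbabilityMeasure ρ] (hJ : IsInteraction J f Mf)
    (hβ : 0 ≤ β) (hρ : HasGaussianMoments ρ) (Λ : Finset V) (h : V → ℝ) :
    IsProbabilityMeasure (fieldGibbs J β ρ Λ h) where
  measure_univ := by
    rw [fieldGibbs, Measure.smul_apply, withDensity_apply _ .univ, setLIntegral_univ, smul_eq_mul]
    exact ENNReal.inv_mul_cancel (partitionFunction_ne_zero Λ h)
      (partitionFunction_ne_top hJ hβ hρ Λ h)

lemma lintegral_fieldGibbs {G : (V → ℝ) → ℝ≥0∞} (hG : Measurable G) :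
    ∫⁻ φ, G φ ∂fieldGibbs J β ρ Λ h = (partitionFunction J β ρ Λ h)⁻¹ *
      ∫⁻ φ, G φ * boltzmannWeight J β Λ h φ ∂iidMeasure V ρ := by
  rw [fieldGibbs, lintegral_smul_measure,
    lintegral_withDensity_eq_lintegral_mul _ (measurable_boltzmannWeight h) hG]
  simp only [Pi.mul_apply, smul_eq_mul, mul_comm]

@[fun_prop]
lemma measurable_restrictTo (Λ : Finset V) : Measurable (restrictTo Λ) :=
  Λ.measurable_restrict

@[fun_prop]
lemma measurable_hamil (ξ : V → ℝ) : Measurable (hamil J β Λ ξ) := by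
  have h_pair (x y : Λ) :
      Measurable fun φ : Λ → ℝ => if x.1 ≠ y.1 then J x.1 y.1 * φ x * φ y else 0 := by
    split_ifs <;> fun_prop
  unfold hamil
  fun_prop

lemma map_restrictTo_iidMeasure [IsProbabilityMeasure ρ] (Λ : Finset V) :
    (iidMeasure V ρ).map (restrictTo Λ) = Measure.pi fun _ : Λ => ρ :=
  Measure.infinitePi_map_restrict (fun _ : V => ρ)

lemma gibbs_eq_map_fieldGibbs [IsProbabilityMeasure ρ] (Λ : Finset V) (ξ : V → ℝ) :
    gibbs J β ρ Λ ξ = (fieldGibbs J β ρ Λ (boundaryField J Λ ξ)).map (restrictTo Λ) := by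
  have h_weight : (fun φ => ENNReal.ofReal (Real.exp (hamil J β Λ ξ φ))) ∘ restrictTo Λ =
      boltzmannWeight J β Λ (boundaryField J Λ ξ) :=
    funext fun φ => by simp only [Function.comp_apply, hamil_restrictTo, boltzmannWeight]
  rw [gibbs, fieldGibbs, ← map_restrictTo_iidMeasure, withDensity_map_eq_map_withDensity _
    (measurable_restrictTo Λ) (by fun_prop), h_weight, Measure.map_smul,
    Measure.map_apply (measurable_restrictTo Λ) .univ, Set.preimage_univ,
    withDensity_apply _ .univ, setLIntegral_univ, partitionFunction]

lemma marg_gibbs_eq_map_fieldGibbs [IsProbabilityMeasure ρ] (hΔ : Δ ⊆ Λ) (ξ : V → ℝ) :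
    marg hΔ (gibbs J β ρ Λ ξ) =
      (fieldGibbs J β ρ Λ (boundaryField J Λ ξ)).map (restrictTo Δ) := by
  rw [marg, gibbs_eq_map_fieldGibbs, Measure.map_map (by fun_prop) (measurable_restrictTo Λ)]
  rfl

lemma IsInteraction.lintegral_fieldGibbs_le [IsProbabilityMeasure ρ] (hJ : IsInteraction J f Mf)
    (hβ : 0 ≤ β) (hlam : 1 ≤ lam)
    (hK : IsBranchingThreshold J f ρ (2 * β * Mf * lam) M K) (hh : IsTempered J f lam Λ Δ h K)
    (hΔ : Δ ⊆ Λ) {G : (V → ℝ) → ℝ≥0∞} (hG : Measurable G) (hGΔ : DependsOn G Δ) :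
    ∫⁻ φ, G φ ∂fieldGibbs J β ρ Λ h ≤ 2 ^ Δ.card *
      ∫⁻ φ, G φ * ∏ z ∈ Δ, siteWeight ρ (2 * β * Mf * lam) K M (φ z) ∂iidMeasure V ρ := by
  have h_bound := hJ.lintegral_mul_boltzmannWeight_le hβ hlam hK hh hΔ hG hGΔ
  rw [mul_assoc] at h_bound
  rw [lintegral_fieldGibbs hG, mul_comm, ← div_eq_mul_inv]
  exact ENNReal.div_le_of_le_mul' h_bound

lemma siteWeight_le (ha : 0 ≤ a) (hac : a ≤ c) (u : ℝ) :
    siteWeight ρ a K M u ≤ ENNReal.ofReal (Real.exp (a * K ^ 2)) * (ρ {u | |u| ≤ M})⁻¹ *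
      ENNReal.ofReal (Real.exp (c * u ^ 2)) := by
  have h_max : max |u| K ^ 2 ≤ u ^ 2 + K ^ 2 := by
    rcases max_choice |u| K with h | h <;> rw [h]
    · rw [sq_abs]
      exact le_add_of_nonneg_right (sq_nonneg K)
    · exact le_add_of_nonneg_left (sq_nonneg u)
  rw [siteWeight, mul_right_comm, ← ENNReal.ofReal_mul (Real.exp_pos _).le, ← Real.exp_add]
  gcongr
  nlinarith [sq_nonneg u]

lemma isFiniteMeasure_rhoMod (hρ : HasGaussianMoments ρ) (a : ℝ) : IsFiniteMeasure (rhoMod ρ a) :=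
  isFiniteMeasure_withDensity (hρ a)

lemma pi_rhoMod [IsProbabilityMeasure ρ] (hρ : HasGaussianMoments ρ) (a : ℝ) (Λ : Finset V) :
    Measure.pi (fun _ : Λ => rhoMod ρ a) =
      ((iidMeasure V ρ).withDensity fun φ =>
        ∏ z ∈ Λ, ENNReal.ofReal (Real.exp (a * φ z ^ 2))).map (restrictTo Λ) := by
  have (_ : Λ) : SigmaFinite
      (ρ.withDensity fun u => ENNReal.ofReal (Real.exp (a * u ^ 2))) :=
    (isFiniteMeasure_rhoMod hρ a).toSigmaFinite
  have h_prod : (fun φ : Λ → ℝ => ∏ z, ENNReal.ofReal (Real.exp (a * φ z ^ 2))) ∘ restrictTo Λ =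
      fun φ => ∏ z ∈ Λ, ENNReal.ofReal (Real.exp (a * φ z ^ 2)) :=
    funext fun φ => Finset.prod_coe_sort Λ fun z => ENNReal.ofReal (Real.exp (a * φ z ^ 2))
  unfold rhoMod
  rw [pi_withDensity (fun _ : Λ => ρ) fun _ => by fun_prop, ← map_restrictTo_iidMeasure,
    withDensity_map_eq_map_withDensity _ (measurable_restrictTo Λ) (by fun_prop), h_prod]

lemma dependsOn_restrictTo (Λ : Finset V) : DependsOn (restrictTo Λ) Λ :=
  fun _ _ h => funext fun x => h x x.2

lemma IsInteraction.map_fieldGibbs_le_smul_pi [IsProbabilityMeasure ρ] (hJ : IsInteraction J f Mf)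
    (hβ : 0 ≤ β) (hlam : 1 ≤ lam) (hρ : HasGaussianMoments ρ)
    (hK : IsBranchingThreshold J f ρ (2 * β * Mf * lam) M K) (ha : 2 * β * Mf * lam ≤ a)
    (hh : IsTempered J f lam Λ Δ h K) (hΔ : Δ ⊆ Λ) :
    (fieldGibbs J β ρ Λ h).map (restrictTo Δ) ≤
      (2 * (ENNReal.ofReal (Real.exp (2 * β * Mf * lam * K ^ 2)) * (ρ {u | |u| ≤ M})⁻¹)) ^ Δ.card •
        Measure.pi fun _ : Δ => rhoMod ρ a := by
  set C := ENNReal.ofReal (Real.exp (2 * β * Mf * lam * K ^ 2)) * (ρ {u | |u| ≤ M})⁻¹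
  have h_site (φ : V → ℝ) : ∏ z ∈ Δ, siteWeight ρ (2 * β * Mf * lam) K M (φ z) ≤
      C ^ Δ.card * ∏ z ∈ Δ, ENNReal.ofReal (Real.exp (a * φ z ^ 2)) := by
    rw [← Finset.prod_const, ← Finset.prod_mul_distrib]
    refine Finset.prod_le_prod' fun z _ => siteWeight_le ?_ ha (φ z)
    have hMf : 0 ≤ Mf := by simpa using hJ.sum_abs_le z ∅
    positivity
  rw [pi_rhoMod hρ, ← Measure.map_smul]
  refine Measure.le_iff.2 fun s hs => ?_
  have hs' := measurable_restrictTo Δ hs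
  rw [Measure.map_apply (measurable_restrictTo Δ) hs,
    Measure.map_apply (measurable_restrictTo Δ) hs, Measure.smul_apply, withDensity_apply _ hs',
    smul_eq_mul, ← lintegral_indicator_one hs', mul_pow, mul_assoc, ← lintegral_indicator hs']
  refine (hJ.lintegral_fieldGibbs_le hβ hlam hK hh hΔ (measurable_one.indicator hs')
    fun φ ψ hφψ => ?_).trans ?_
  · simp only [Set.indicator, Set.mem_preimage, dependsOn_restrictTo Δ hφψ, Pi.one_apply]
  gcongr
  rw [← lintegral_const_mul _ (Measurable.indicator (by fun_prop) hs')]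
  refine lintegral_mono fun φ => ?_
  by_cases hφ : φ ∈ restrictTo Δ ⁻¹' s
  · simpa only [Set.indicator_of_mem hφ, Pi.one_apply, one_mul] using h_site φ
  · simp only [Set.indicator_of_notMem hφ, zero_mul, mul_zero, le_refl]

lemma ofReal_abs_mul_siteWeight_le {u : ℝ} (hu : K ≤ |u|) :
    ENNReal.ofReal |u| * siteWeight ρ a K M u ≤
      ENNReal.ofReal (Real.exp ((a + 1) * u ^ 2)) * (ρ {u | |u| ≤ M})⁻¹ := by
  rw [siteWeight, max_eq_left hu, sq_abs, ← mul_assoc, ← ENNReal.ofReal_mul (abs_nonneg _),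
    add_one_mul, Real.exp_add, mul_comm (Real.exp _)]
  gcongr
  nlinarith [Real.add_one_le_exp (u ^ 2), sq_abs u, sq_nonneg (|u| - 1)]

lemma IsInteraction.lintegral_abs_fieldGibbs_le [IsProbabilityMeasure ρ]
    (hJ : IsInteraction J f Mf) (hβ : 0 ≤ β) (hlam : 1 ≤ lam) (hρ : HasGaussianMoments ρ)
    (hK : IsBranchingThreshold J f ρ (2 * β * Mf * lam) M K) {y : V} (hy : y ∈ Λ)
    (hh : IsTempered J f lam Λ {y} h K) :
    ∫⁻ φ, ENNReal.ofReal |φ y| ∂fieldGibbs J β ρ Λ h ≤ ENNReal.ofReal K +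
      2 * ((∫⁻ u, ENNReal.ofReal (Real.exp ((2 * β * Mf * lam + 1) * u ^ 2)) ∂ρ) *
        (ρ {u | |u| ≤ M})⁻¹) := by
  have := isProbabilityMeasure_fieldGibbs hJ hβ hρ Λ h
  set g : ℝ → ℝ≥0∞ := {u | K < |u|}.indicator fun u => ENNReal.ofReal |u|
  have hg : Measurable g := Measurable.indicator (by fun_prop) (measurableSet_lt_abs K)
  have hg_of_lt (u : ℝ) (hu : K < |u|) : g u = ENNReal.ofReal |u| := Set.indicator_of_mem hu _
  have hg_of_le (u : ℝ) (hu : |u| ≤ K) : g u = 0 := Set.indicator_of_notMem (not_lt.2 hu) _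
  have h_split (u : ℝ) : ENNReal.ofReal |u| ≤ ENNReal.ofReal K + g u := by
    rcases lt_or_ge K |u| with hu | hu
    · exact hg_of_lt u hu ▸ le_add_self
    · exact (ENNReal.ofReal_le_ofReal hu).trans le_self_add
  have h_tail (u : ℝ) : g u * siteWeight ρ (2 * β * Mf * lam) K M u ≤
      ENNReal.ofReal (Real.exp ((2 * β * Mf * lam + 1) * u ^ 2)) * (ρ {u | |u| ≤ M})⁻¹ := by
    rcases lt_or_ge K |u| with hu | hu
    · exact hg_of_lt u hu ▸ ofReal_abs_mul_siteWeight_le hu.le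
    · rw [hg_of_le u hu, zero_mul]
      exact zero_le
  calc ∫⁻ φ, ENNReal.ofReal |φ y| ∂fieldGibbs J β ρ Λ h
      ≤ ∫⁻ φ, (ENNReal.ofReal K + g (φ y)) ∂fieldGibbs J β ρ Λ h :=
        lintegral_mono fun φ => h_split (φ y)
    _ = ENNReal.ofReal K + ∫⁻ φ, g (φ y) ∂fieldGibbs J β ρ Λ h := by
        rw [lintegral_add_left measurable_const, lintegral_const, measure_univ, mul_one]
    _ ≤ ENNReal.ofReal K + 2 * ∫⁻ φ, g (φ y) * siteWeight ρ (2 * β * Mf * lam) K M (φ y)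
          ∂iidMeasure V ρ := by
        gcongr
        simpa using hJ.lintegral_fieldGibbs_le hβ hlam hK hh (by simpa using hy)
          (hg.comp (measurable_pi_apply y)) fun φ ψ hφψ => by simp [hφψ y]
    _ ≤ _ := by
        rw [lintegral_eval_infinitePi (fun _ => ρ) y
          (g := fun u => g u * siteWeight ρ _ K M u) (hg.mul measurable_siteWeight),
          ← lintegral_mul_const _ (by fun_prop)]
        exact add_le_add le_rfl (mul_le_mul_right (lintegral_mono h_tail) 2)

lemma pi_eq_smul_prodN (σ : Measure ℝ) [IsFiniteMeasure σ] (Λ : Finset V) :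
    Measure.pi (fun _ : Λ => σ) = σ Set.univ ^ Λ.card • prodN σ Λ := by
  have h_mass : Measure.pi (fun _ : Λ => σ) Set.univ = σ Set.univ ^ Λ.card := by
    simp [Measure.pi_univ]
  rw [prodN, smul_smul, h_mass]
  by_cases h_zero : σ Set.univ ^ Λ.card = 0
  · rw [h_zero, zero_mul, zero_smul, ← Measure.measure_univ_eq_zero, h_mass, h_zero]
  · rw [ENNReal.mul_inv_cancel h_zero (ENNReal.pow_ne_top (measure_ne_top _ _)), one_smul]

lemma exists_smul_pi_le_exp_smul_prodN (V : Type*) (σ : Measure ℝ) [IsFiniteMeasure σ] {C : ℝ≥0∞}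
    (hC : C ≠ ⊤) : ∃ B : ℝ, 0 ≤ B ∧ ∀ Λ : Finset V,
      C ^ Λ.card • Measure.pi (fun _ : Λ => σ) ≤
        ENNReal.ofReal (Real.exp (B * Λ.card)) • prodN σ Λ := by
  have h_top : C * σ Set.univ ≠ ⊤ := ENNReal.mul_ne_top hC (measure_ne_top _ _)
  refine ⟨(C * σ Set.univ).toReal, ENNReal.toReal_nonneg, fun Λ => ?_⟩
  rw [pi_eq_smul_prodN, smul_smul, ← mul_pow, mul_comm _ (Λ.card : ℝ), Real.exp_nat_mul,
    ENNReal.ofReal_pow (Real.exp_pos _).le]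
  gcongr
  refine (ENNReal.le_ofReal_iff_toReal_le h_top (Real.exp_pos _).le).2 ?_
  linarith [Real.add_one_le_exp (C * σ Set.univ).toReal]

lemma IsInteraction.exists_lintegral_abs_fieldGibbs_le [IsProbabilityMeasure ρ]
    (hJ : IsInteraction J f Mf) (hβ : 0 ≤ β) (hlam : 1 ≤ lam) (hρ : HasGaussianMoments ρ)
    (hK : ∀ K' ≥ K, IsBranchingThreshold J f ρ (2 * β * Mf * lam) M K') :
    ∃ D : ℝ, ∀ (Λ : Finset V) (h : V → ℝ) (x y : V), IsTempered J f lam Λ {x} h K → y ∈ Λ →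
      J x y ≠ 0 → ∫⁻ φ, ENNReal.ofReal |φ y| ∂fieldGibbs J β ρ Λ h ≤
        ENNReal.ofReal (D * f (J x y)) := by
  set T := 2 * ((∫⁻ u, ENNReal.ofReal (Real.exp ((2 * β * Mf * lam + 1) * u ^ 2)) ∂ρ) *
    (ρ {u | |u| ≤ M})⁻¹)
  have hT : T ≠ ⊤ := ENNReal.mul_ne_top ENNReal.ofNat_ne_top
    (ENNReal.mul_ne_top (hρ _) (ENNReal.inv_ne_top.2 (hK K le_rfl).measure_ne_zero))
  have hK_nonneg : 0 ≤ K := (hK K le_rfl).nonneg.trans (hK K le_rfl).le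
  refine ⟨lam * K + T.toReal, fun Λ h x y hh hy hxy => ?_⟩
  have hf := hJ.one_le (J x y)
  have h_level : K ≤ lam * f (J x y) * K :=
    le_mul_of_one_le_left hK_nonneg (one_le_mul_of_one_le_of_one_le hlam hf)
  calc ∫⁻ φ, ENNReal.ofReal |φ y| ∂fieldGibbs J β ρ Λ h
      ≤ ENNReal.ofReal (lam * f (J x y) * K) + T :=
        hJ.lintegral_abs_fieldGibbs_le hβ hlam hρ (hK _ h_level) hy (hh.neighbor hy hxy)
    _ = ENNReal.ofReal (lam * f (J x y) * K + T.toReal) := by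
        rw [ENNReal.ofReal_add (hK_nonneg.trans h_level) ENNReal.toReal_nonneg,
          ENNReal.ofReal_toReal hT]
    _ ≤ ENNReal.ofReal ((lam * K + T.toReal) * f (J x y)) := by
        gcongr
        linarith [le_mul_of_one_le_right (ENNReal.toReal_nonneg (a := T)) hf]

end FieldGibbs

/-! ### The specification kernel -/

section GibbsKernel

variable {V : Type*} {J : V → V → ℝ} {f : ℝ → ℝ} {Mf β : ℝ} {ρ : Measure ℝ} {Λ Λ' : Finset V}

lemma measurable_lintegral_fieldGibbs [IsProbabilityMeasure ρ] {G : (V → ℝ) → ℝ≥0∞}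
    (hG : Measurable G) : Measurable fun h => ∫⁻ φ, G φ ∂fieldGibbs J β ρ Λ h := by
  simp_rw [lintegral_fieldGibbs hG]
  have h_weight : Measurable fun p : (V → ℝ) × (V → ℝ) => boltzmannWeight J β Λ p.1 p.2 :=
    measurable_uncurry_energy.exp.ennreal_ofReal
  exact h_weight.lintegral_prod_right'.inv.mul
    ((hG.comp measurable_snd).mul h_weight).lintegral_prod_right'

/-- The specification: the law of the spins in `Λ` as a function of the external field. -/
noncomputable def gibbsKernel (J : V → V → ℝ) (β : ℝ) (ρ : Measure ℝ) [IsProbabilityMeasure ρ]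
    (Λ : Finset V) : ProbabilityTheory.Kernel (V → ℝ) (Λ → ℝ) where
  toFun h := (fieldGibbs J β ρ Λ h).map (restrictTo Λ)
  measurable' := by
    refine Measure.measurable_of_measurable_coe _ fun s hs => ?_
    have h_pre : MeasurableSet (restrictTo Λ ⁻¹' s) := measurable_restrictTo Λ hs
    simp_rw [Measure.map_apply (measurable_restrictTo Λ) hs, ← lintegral_indicator_one h_pre]
    exact measurable_lintegral_fieldGibbs (measurable_one.indicator h_pre)

lemma gibbsKernel_apply [IsProbabilityMeasure ρ] (Λ : Finset V) (h : V → ℝ) :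
    gibbsKernel J β ρ Λ h = (fieldGibbs J β ρ Λ h).map (restrictTo Λ) :=
  rfl

lemma gibbsKernel_boundaryField [IsProbabilityMeasure ρ] (Λ : Finset V) (ξ : V → ℝ) :
    gibbsKernel J β ρ Λ (boundaryField J Λ ξ) = gibbs J β ρ Λ ξ :=
  (gibbs_eq_map_fieldGibbs Λ ξ).symm

lemma isMarkovKernel_gibbsKernel [IsProbabilityMeasure ρ] (hJ : IsInteraction J f Mf) (hβ : 0 ≤ β)
    (hρ : HasGaussianMoments ρ) (Λ : Finset V) :
    ProbabilityTheory.IsMarkovKernel (gibbsKernel J β ρ Λ) where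
  isProbabilityMeasure h :=
    have := isProbabilityMeasure_fieldGibbs hJ hβ hρ Λ h
    Measure.isProbabilityMeasure_map (measurable_restrictTo Λ).aemeasurable

lemma dependsOn_gibbsKernel [IsProbabilityMeasure ρ] (Λ : Finset V) :
    DependsOn (gibbsKernel J β ρ Λ) Λ := by
  intro h h' hh
  have h_weight : boltzmannWeight J β Λ h = boltzmannWeight J β Λ h' := by
    funext φ
    have h_field : ∑ x ∈ Λ, φ x * h x = ∑ x ∈ Λ, φ x * h' x :=
      Finset.sum_congr rfl fun x hx => by rw [hh x hx]
    rw [boltzmannWeight, boltzmannWeight, energy, energy, h_field]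
  simp only [gibbsKernel_apply, fieldGibbs, partitionFunction, h_weight]

lemma measurable_effectiveField (Λ Λ' : Finset V) (h : V → ℝ) :
    Measurable (effectiveField J Λ Λ' h) := by
  unfold effectiveField
  fun_prop

lemma lintegral_restrictTo_fieldGibbs [IsProbabilityMeasure ρ] (hJ : IsInteraction J f Mf)
    (hβ : 0 ≤ β) (hρ : HasGaussianMoments ρ) (hΛ : Λ ⊆ Λ') (h : V → ℝ) {G : (Λ → ℝ) → ℝ≥0∞}
    (hG : Measurable G) :
    ∫⁻ φ, G (restrictTo Λ φ) ∂fieldGibbs J β ρ Λ' h =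
      ∫⁻ φ, ∫⁻ ψ, G (restrictTo Λ ψ) ∂fieldGibbs J β ρ Λ (effectiveField J Λ Λ' h φ)
        ∂fieldGibbs J β ρ Λ' h := by
  have hG_restrict : Measurable fun φ => G (restrictTo Λ φ) := by fun_prop
  have h_inner : Measurable fun φ =>
      ∫⁻ ψ, G (restrictTo Λ ψ) ∂fieldGibbs J β ρ Λ (effectiveField J Λ Λ' h φ) :=
    (measurable_lintegral_fieldGibbs hG_restrict).comp (measurable_effectiveField Λ Λ' h)
  have h_weight (φ ψ : V → ℝ) : boltzmannWeight J β Λ' h ((Λ : Set V).piecewise ψ φ) =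
      boltzmannWeight J β Λ (effectiveField J Λ Λ' h φ) ψ * boltzmannWeight J β (Λ' \ Λ) h φ := by
    rw [boltzmannWeight, energy_eq_add_sdiff hJ.symm hΛ, effectiveField_piecewise,
      dependsOn_energy _ fun x hx => Set.piecewise_eq_of_mem _ _ _ hx,
      dependsOn_energy (Λ := Λ' \ Λ) h fun x hx => Set.piecewise_eq_of_notMem _ _ _
        (Finset.mem_sdiff.1 hx).2, Real.exp_add, ENNReal.ofReal_mul (Real.exp_pos _).le]
    rfl
  have h_restrict (φ ψ : V → ℝ) : restrictTo Λ ((Λ : Set V).piecewise ψ φ) = restrictTo Λ ψ :=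
    funext fun x => Set.piecewise_eq_of_mem _ _ _ x.2
  rw [lintegral_fieldGibbs hG_restrict, lintegral_fieldGibbs h_inner,
    lintegral_infinitePi_eq_lintegral_piecewise (fun _ => ρ) Λ
      (F := fun φ => G (restrictTo Λ φ) * boltzmannWeight J β Λ' h φ)
      (hG_restrict.mul (measurable_boltzmannWeight h)),
    lintegral_infinitePi_eq_lintegral_piecewise (fun _ => ρ) Λ (F := fun φ =>
      (∫⁻ ψ, G (restrictTo Λ ψ) ∂fieldGibbs J β ρ Λ (effectiveField J Λ Λ' h φ)) *
        boltzmannWeight J β Λ' h φ) (h_inner.mul (measurable_boltzmannWeight h))]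
  congr 1
  refine lintegral_congr fun φ => ?_
  have hW := measurable_boltzmannWeight (J := J) (β := β) (Λ := Λ) (effectiveField J Λ Λ' h φ)
  simp only [effectiveField_piecewise, h_weight, h_restrict, ← mul_assoc]
  rw [lintegral_mul_const (f := fun ψ => G (restrictTo Λ ψ) * boltzmannWeight J β Λ _ ψ) _
    (hG_restrict.mul hW), lintegral_mul_const _ (hW.const_mul _), lintegral_const_mul _ hW,
    lintegral_fieldGibbs hG_restrict]
  congr 1
  change _ = (partitionFunction J β ρ Λ _)⁻¹ * _ * partitionFunction J β ρ Λ _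
  rw [mul_comm, ← mul_assoc, ENNReal.mul_inv_cancel (partitionFunction_ne_zero Λ _)
    (partitionFunction_ne_top hJ hβ hρ Λ _), one_mul]

lemma map_restrictTo_fieldGibbs_eq_bind [IsProbabilityMeasure ρ] (hJ : IsInteraction J f Mf)
    (hβ : 0 ≤ β) (hρ : HasGaussianMoments ρ) (hΛ : Λ ⊆ Λ') (h : V → ℝ) :
    (fieldGibbs J β ρ Λ' h).map (restrictTo Λ) =
      ((fieldGibbs J β ρ Λ' h).map (effectiveField J Λ Λ' h)).bind (gibbsKernel J β ρ Λ) := by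
  ext s hs
  have hs_ind : Measurable (s.indicator (1 : (Λ → ℝ) → ℝ≥0∞)) := measurable_one.indicator hs
  rw [Measure.bind_apply hs (gibbsKernel J β ρ Λ).measurable.aemeasurable,
    lintegral_map ((gibbsKernel J β ρ Λ).measurable_coe hs) (measurable_effectiveField Λ Λ' h),
    ← lintegral_indicator_one hs, lintegral_map hs_ind (measurable_restrictTo Λ),
    lintegral_restrictTo_fieldGibbs hJ hβ hρ hΛ h hs_ind]
  refine lintegral_congr fun φ => ?_
  rw [gibbsKernel_apply, ← lintegral_map hs_ind (measurable_restrictTo Λ),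
    lintegral_indicator_one hs]

lemma toReal_partitionFunction (h : V → ℝ) :
    (partitionFunction J β ρ Λ h).toReal = ∫ φ, Real.exp (energy J β Λ h φ) ∂iidMeasure V ρ :=
  (integral_eq_lintegral_of_nonneg_ae (ae_of_all _ fun _ => (Real.exp_pos _).le)
    (measurable_energy h).exp.aestronglyMeasurable).symm

lemma integral_fieldGibbs (h : V → ℝ) (G : (V → ℝ) → ℝ) :
    ∫ φ, G φ ∂fieldGibbs J β ρ Λ h = (∫ φ, Real.exp (energy J β Λ h φ) ∂iidMeasure V ρ)⁻¹ *
      ∫ φ, Real.exp (energy J β Λ h φ) * G φ ∂iidMeasure V ρ := by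
  rw [fieldGibbs, integral_smul_measure, integral_withDensity_eq_integral_toReal_smul
    (measurable_boltzmannWeight h) (ae_of_all _ fun _ => ENNReal.ofReal_lt_top),
    ENNReal.toReal_inv, toReal_partitionFunction]
  simp_rw [boltzmannWeight, ENNReal.toReal_ofReal (Real.exp_pos _).le, smul_eq_mul]

lemma continuous_integral_exp_energy_mul [Countable V] [IsProbabilityMeasure ρ]
    (hJ : IsInteraction J f Mf) (hβ : 0 ≤ β) (hρ : HasGaussianMoments ρ) {G : (V → ℝ) → ℝ}
    (hG : Measurable G) {C : ℝ} (hC : ∀ φ, |G φ| ≤ C) :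
    Continuous fun h : V → ℝ => ∫ φ, Real.exp (energy J β Λ h φ) * G φ ∂iidMeasure V ρ := by
  refine continuous_iff_continuousAt.2 fun h₀ => ?_
  set R : ℝ := ∑ x ∈ Λ, |h₀ x| + 1
  have h_bound : ∀ᶠ h in nhds h₀, ∀ x ∈ Λ, |h x| ≤ R := by
    have h_cont : Continuous fun h : V → ℝ => ∑ x ∈ Λ, |h x| := by fun_prop
    filter_upwards [h_cont.continuousAt.eventually_lt_const (lt_add_one _)] with h hh x hx
    exact (Finset.single_le_sum (f := fun x => |h x|) (fun _ _ => abs_nonneg _) hx).trans hh.le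
  refine continuousAt_of_dominated
    (bound := fun φ => (gaussianEnvelope (β * (Mf + R)) Λ φ).toReal * C)
    (Eventually.of_forall fun h =>
      ((measurable_energy h).exp.mul hG).aestronglyMeasurable) ?_ ?_
    (ae_of_all _ fun φ => ((continuous_energy_field φ).rexp.mul continuous_const).continuousAt)
  · filter_upwards [h_bound] with h hh
    refine ae_of_all _ fun φ => ?_
    rw [norm_mul, Real.norm_eq_abs, Real.norm_eq_abs, abs_of_pos (Real.exp_pos _)]
    gcongr
    · exact (ENNReal.ofReal_le_iff_le_toReal (ENNReal.prod_ne_top fun _ _ =>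
        ENNReal.ofReal_ne_top)).1 (hJ.boltzmannWeight_le_gaussianEnvelope hβ hh φ)
    · exact hC φ
  · have h_envelope : Measurable (gaussianEnvelope (β * (Mf + R)) Λ) := by
      unfold gaussianEnvelope
      fun_prop
    exact (integrable_toReal_of_lintegral_ne_top h_envelope.aemeasurable
      (lintegral_gaussianEnvelope_ne_top hρ _ Λ)).mul_const C

lemma continuous_integral_gibbsKernel [Countable V] [IsProbabilityMeasure ρ]
    (hJ : IsInteraction J f Mf) (hβ : 0 ≤ β) (hρ : HasGaussianMoments ρ) {g : (Λ → ℝ) → ℝ}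
    (hg : Measurable g) {C : ℝ} (hC : ∀ ψ, |g ψ| ≤ C) :
    Continuous fun h => ∫ ψ, g ψ ∂gibbsKernel J β ρ Λ h := by
  simp_rw [gibbsKernel_apply, integral_map (measurable_restrictTo Λ).aemeasurable
    hg.aestronglyMeasurable, integral_fieldGibbs]
  have h_partition : Continuous fun h => ∫ φ, Real.exp (energy J β Λ h φ) ∂iidMeasure V ρ := by
    simpa using continuous_integral_exp_energy_mul (Λ := Λ) hJ hβ hρ (G := fun _ => 1)
      measurable_const (C := 1) (by simp)
  refine (h_partition.inv₀ fun h => ?_).mul (continuous_integral_exp_energy_mul hJ hβ hρ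
    (hg.comp (measurable_restrictTo Λ)) fun φ => hC _)
  rw [← toReal_partitionFunction]
  exact ENNReal.toReal_ne_zero.2
    ⟨partitionFunction_ne_zero Λ h, partitionFunction_ne_top hJ hβ hρ Λ h⟩

end GibbsKernel

/-! ### Convergence in distribution -/

lemma abs_integral_sub_le_of_lipschitzWith {Ω E : Type*} [MeasurableSpace Ω] {μ : Measure Ω}
    [PseudoEMetricSpace E] {F : E → ℝ} {L : NNReal} (hF : LipschitzWith L F) {X Y : Ω → E}
    (hX : Integrable (fun ω => F (X ω)) μ) (hY : Integrable (fun ω => F (Y ω)) μ) {ε : ℝ}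
    (hε : 0 ≤ ε) (hXY : ∫⁻ ω, edist (X ω) (Y ω) ∂μ ≤ ENNReal.ofReal ε) :
    |∫ ω, F (X ω) ∂μ - ∫ ω, F (Y ω) ∂μ| ≤ L * ε := by
  rw [← integral_sub hX hY, ← Real.norm_eq_abs]
  refine (norm_integral_le_lintegral_norm _).trans
    (ENNReal.toReal_le_of_le_ofReal (by positivity) ?_)
  calc ∫⁻ ω, ENNReal.ofReal ‖F (X ω) - F (Y ω)‖ ∂μ ≤ ∫⁻ ω, L * edist (X ω) (Y ω) ∂μ :=
        lintegral_mono fun ω => by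
          simpa only [ofReal_norm, edist_eq_enorm_sub] using hF (X ω) (Y ω)
    _ = L * ∫⁻ ω, edist (X ω) (Y ω) ∂μ := lintegral_const_mul' _ _ ENNReal.coe_ne_top
    _ ≤ L * ENNReal.ofReal ε := by gcongr
    _ = ENNReal.ofReal (L * ε) := by
        rw [ENNReal.ofReal_mul L.coe_nonneg, ENNReal.ofReal_coe_nnreal]

lemma tendsto_of_forall_eventually_dist_le {ι κ α : Type*} [PseudoMetricSpace α] {l : Filter ι}
    {l' : Filter κ} [l'.NeBot] {a : ι → α} {b : κ → ι → α} {c : κ → α} {d : α}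
    (hb : ∀ k, Tendsto (b k) l (nhds (c k))) (hc : Tendsto c l' (nhds d))
    (hab : ∀ ε > 0, ∀ᶠ k in l', ∀ᶠ i in l, dist (a i) (b k i) ≤ ε) : Tendsto a l (nhds d) := by
  refine Metric.tendsto_nhds.2 fun ε hε => ?_
  have hε' : 0 < ε / 3 := by positivity
  obtain ⟨k, hck, hk⟩ := ((Metric.tendsto_nhds.1 hc _ hε').and (hab _ hε')).exists
  filter_upwards [hk, Metric.tendsto_nhds.1 (hb k) _ hε'] with i hi hbi
  linarith [dist_triangle4 (a i) (b k i) (c k) d]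

section TendstoInDistribution

variable {ι E : Type*} [MeasurableSpace E] {l : Filter ι}

lemma le_of_tendsto_of_eventually_le [PseudoEMetricSpace E] [OpensMeasurableSpace E] [l.NeBot]
    {μs : ι → ProbabilityMeasure E} {μ : ProbabilityMeasure E} (hμ : Tendsto μs l (nhds μ))
    {P : Measure E} [P.OuterRegular] (hP : ∀ᶠ i in l, (μs i : Measure E) ≤ P) :
    (μ : Measure E) ≤ P := by
  have h_open (G : Set E) (hG : IsOpen G) : (μ : Measure E) G ≤ P G :=
    (ProbabilityMeasure.le_liminf_measure_open_of_tendsto hμ hG).trans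
      (liminf_le_of_le (by isBoundedDefault) fun _ hb => by
        obtain ⟨i, h_le, hi⟩ := (hb.and hP).exists
        exact h_le.trans (hi G))
  refine Measure.le_iff.2 fun s _ => ?_
  rw [s.measure_eq_iInf_isOpen P]
  exact le_iInf₂ fun G hsG => le_iInf fun hG => (measure_mono hsG).trans (h_open G hG)

lemma lintegral_coe_le_of_tendsto [TopologicalSpace E] [OpensMeasurableSpace E] [l.NeBot]
    {μs : ι → ProbabilityMeasure E} {μ : ProbabilityMeasure E} (hμ : Tendsto μs l (nhds μ))
    {F : E → NNReal} (hF : Continuous F) {c : ℝ≥0∞}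
    (hc : ∀ᶠ i in l, ∫⁻ u, F u ∂(μs i : Measure E) ≤ c) : ∫⁻ u, F u ∂(μ : Measure E) ≤ c := by
  have h_truncated (n : ℕ) : ∫⁻ u, (min (F u) n : NNReal) ∂(μ : Measure E) ≤ c := by
    let G : BoundedContinuousFunction E NNReal :=
      BoundedContinuousFunction.mkOfBound ⟨fun u => min (F u) n, by fun_prop⟩ n fun u v => by
        change dist (min (F u) (n : NNReal)) (min (F v) n) ≤ n
        rw [NNReal.dist_eq, abs_sub_le_iff]
        have h_le (w : E) : ((min (F w) n : NNReal) : ℝ) ≤ n :=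
          NNReal.coe_le_coe.2 (min_le_right _ _)
        exact ⟨by linarith [h_le u, NNReal.coe_nonneg (min (F v) n)],
          by linarith [h_le v, NNReal.coe_nonneg (min (F u) n)]⟩
    refine le_of_tendsto (ProbabilityMeasure.tendsto_iff_forall_lintegral_tendsto.1 hμ G) ?_
    filter_upwards [hc] with i hi
    exact (lintegral_mono fun u => ENNReal.coe_le_coe.2 (min_le_left _ _)).trans hi
  refine le_of_tendsto' (lintegral_tendsto_of_tendsto_of_monotone
    (f := fun n : ℕ => fun u => ((min (F u) n : NNReal) : ℝ≥0∞))
    (fun n => (hF.min continuous_const).measurable.coe_nnreal_ennreal.aemeasurable)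
    (ae_of_all _ fun u n m hnm => ENNReal.coe_le_coe.2
      (min_le_min_left _ (Nat.cast_le.2 hnm))) (ae_of_all _ fun u => ?_)) h_truncated
  obtain ⟨N, hN⟩ := exists_nat_ge (F u)
  refine tendsto_const_nhds.congr' ?_
  filter_upwards [eventually_ge_atTop N] with n hn
  rw [min_eq_left (hN.trans (by exact_mod_cast hn))]

lemma tendstoInDistribution_of_forall_lintegral_edist_le {κ Ω' : Type*} {Ω : ι → Type*}
    [∀ i, MeasurableSpace (Ω i)] [MeasurableSpace Ω'] [PseudoEMetricSpace E] [BorelSpace E]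
    {l' : Filter κ} [l.IsCountablyGenerated] [l'.NeBot]
    {μ : ∀ i, Measure (Ω i)} [∀ i, IsProbabilityMeasure (μ i)] {ν : Measure Ω'}
    [IsProbabilityMeasure ν] {X : ∀ i, Ω i → E} {Y : κ → ∀ i, Ω i → E} {Z : κ → Ω' → E}
    {W : Ω' → E} (hX : ∀ i, AEMeasurable (X i) (μ i))
    (hY : ∀ k, TendstoInDistribution (Y k) l (Z k) μ ν)
    (hZ : TendstoInDistribution Z l' W (fun _ => ν) ν)
    (hXY : ∀ ε > 0, ∀ᶠ k in l', ∀ᶠ i in l,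
      ∫⁻ ω, edist (X i ω) (Y k i ω) ∂μ i ≤ ENNReal.ofReal ε) :
    TendstoInDistribution X l W μ ν where
  forall_aemeasurable := hX
  aemeasurable_limit := hZ.aemeasurable_limit
  tendsto := by
    refine tendsto_iff_forall_lipschitz_integral_tendsto.2 fun F ⟨C, hC⟩ ⟨L, hL⟩ => ?_
    let F' : BoundedContinuousFunction E ℝ := ⟨⟨F, hL.continuous⟩, C, hC⟩
    have h_integrable {Ω₀ : Type _} [MeasurableSpace Ω₀] {μ₀ : Measure Ω₀} [IsFiniteMeasure μ₀]
        {U : Ω₀ → E} (hU : AEMeasurable U μ₀) : Integrable (fun ω => F (U ω)) μ₀ :=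
      (F'.integrable (μ₀.map U)).comp_aemeasurable hU
    refine tendsto_of_forall_eventually_dist_le (l' := l')
      (fun k => ProbabilityMeasure.tendsto_iff_forall_integral_tendsto.1 (hY k).tendsto F')
      (ProbabilityMeasure.tendsto_iff_forall_integral_tendsto.1 hZ.tendsto F') fun ε hε => ?_
    filter_upwards [hXY (ε / (L + 1)) (by positivity)] with k hk
    filter_upwards [hk] with i hi
    have hYi := (hY k).forall_aemeasurable i
    rw [ProbabilityMeasure.coe_mk, ProbabilityMeasure.coe_mk,
      integral_map (hX i) hL.continuous.measurable.aestronglyMeasurable,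
      integral_map hYi F'.continuous.measurable.aestronglyMeasurable, Real.dist_eq]
    refine (abs_integral_sub_le_of_lipschitzWith hL (h_integrable (hX i)) (h_integrable hYi)
      (by positivity) hi).trans ?_
    rw [← mul_div_assoc, div_le_iff₀ (by positivity)]
    linarith

lemma integral_bind_kernel {α : Type*} [MeasurableSpace α] (m : Measure α)
    (κ : ProbabilityTheory.Kernel α E) {g : E → ℝ}
    (hg : Integrable g (m.bind κ)) : ∫ u, g u ∂m.bind κ = ∫ x, ∫ u, g u ∂κ x ∂m := by
  have h_comp : m.bind κ = (κ.comp (ProbabilityTheory.Kernel.const Unit m)) () := by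
    rw [ProbabilityTheory.Kernel.comp_const, ProbabilityTheory.Kernel.const_apply]
  rw [h_comp] at hg ⊢
  rw [ProbabilityTheory.Kernel.integral_comp hg, ProbabilityTheory.Kernel.const_apply]

end TendstoInDistribution

/-! ### Local convergence and the fields it carries along -/

section LocallyTendsto

variable {V ι : Type*} {l : Filter ι} {μ : ι → Measure (V → ℝ)} [∀ i, IsProbabilityMeasure (μ i)]
  {ν : Measure (V → ℝ)} [IsProbabilityMeasure ν]

/-- The measures `μ i` on `ℝ^V` converge locally to `ν`: all finite-dimensional marginals converge
weakly. -/
def LocallyTendsto (μ : ι → Measure (V → ℝ)) [∀ i, IsProbabilityMeasure (μ i)] (l : Filter ι)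
    (ν : Measure (V → ℝ)) [IsProbabilityMeasure ν] : Prop :=
  ∀ Δ : Finset V, TendstoInDistribution (fun _ => restrictTo Δ) l (restrictTo Δ) μ ν

lemma LocallyTendsto.lintegral_enorm_mul_le [l.NeBot] (hμ : LocallyTendsto μ l ν) {y : V} {c : ℝ}
    {C : ℝ≥0∞} (hC : ∀ᶠ i in l, ∫⁻ φ, ‖c * φ y‖ₑ ∂μ i ≤ C) : ∫⁻ φ, ‖c * φ y‖ₑ ∂ν ≤ C := by
  let F : (({y} : Finset V) → ℝ) → NNReal := fun ψ => ‖c * ψ ⟨y, Finset.mem_singleton_self y⟩‖₊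
  have hF : Continuous F := by fun_prop
  have h_map (m : Measure (V → ℝ)) :
      ∫⁻ ψ, F ψ ∂m.map (restrictTo {y}) = ∫⁻ φ, ‖c * φ y‖ₑ ∂m :=
    lintegral_map hF.measurable.coe_nnreal_ennreal (measurable_restrictTo {y})
  rw [← h_map]
  refine lintegral_coe_le_of_tendsto (hμ {y}).tendsto hF ?_
  filter_upwards [hC] with i hi
  exact (h_map _).trans_le hi

variable {J : V → V → ℝ} {w : V → V → ℝ≥0∞} {Λs : ι → Finset V}

lemma ae_summable_of_lintegral_enorm_le [Countable V] {m : Measure (V → ℝ)} {x : V}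
    (hw : ∑' y, w x y ≠ ⊤) (hm : ∀ y, ∫⁻ φ, ‖J x y * φ y‖ₑ ∂m ≤ w x y) :
    ∀ᵐ φ ∂m, Summable fun y => J x y * φ y := by
  have h_meas (y : V) : Measurable fun φ : V → ℝ => ‖J x y * φ y‖ₑ := by fun_prop
  have h_lintegral : ∫⁻ φ, ∑' y, ‖J x y * φ y‖ₑ ∂m ≠ ⊤ := by
    rw [lintegral_tsum fun y => (h_meas y).aemeasurable]
    exact ne_top_of_le_ne_top hw (ENNReal.tsum_le_tsum hm)
  filter_upwards [ae_lt_top (Measurable.tsum h_meas) h_lintegral] with φ hφ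
  exact (ENNReal.tsum_coe_ne_top_iff_summable.1 hφ.ne).of_nnnorm

lemma boundaryField_eq_tsum_sub_sum (Λ : Finset V) {φ : V → ℝ} {x : V}
    (hφ : Summable fun y => J x y * φ y) :
    boundaryField J Λ φ x = ∑' y, J x y * φ y - ∑ y ∈ Λ, J x y * φ y :=
  eq_sub_of_add_eq' (hφ.sum_add_tsum_subtype_compl Λ)

lemma tendsto_boundaryField_atTop {ξ : V → ℝ} {x : V} (hξ : Summable fun y => J x y * ξ y) :
    Tendsto (fun Λ => boundaryField J Λ ξ x) atTop (nhds 0) := by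
  simp_rw [boundaryField_eq_tsum_sub_sum _ hξ]
  simpa only [sub_self, SummationFilter.unconditional_filter] using
    hξ.hasSum.const_sub (∑' y, J x y * ξ y)

lemma tendsto_effectiveField_atTop (Λ : Finset V) {φ : V → ℝ} {x : V}
    (hφ : Summable fun y => J x y * φ y) :
    Tendsto (fun S => effectiveField J Λ S 0 φ x) atTop (nhds (boundaryField J Λ φ x)) := by
  rw [boundaryField_eq_tsum_sub_sum Λ hφ]
  refine (hφ.hasSum.sub_const _).congr' ?_
  filter_upwards [eventually_ge_atTop Λ] with S hS
  rw [effectiveField, Pi.zero_apply, zero_add, ← Finset.sum_sdiff hS, add_sub_cancel_right]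

lemma measurable_boundaryField [Countable V] (Λ : Finset V) : Measurable (boundaryField J Λ) := by
  unfold boundaryField
  exact measurable_pi_lambda _ fun x => Measurable.tsum fun y => by fun_prop

lemma lintegral_enorm_effectiveField_sub_le {m : Measure (V → ℝ)} [IsProbabilityMeasure m]
    {S Λ' : Finset V} (Λ : Finset V) (hS : S ⊆ Λ') (h : V → ℝ) {x : V}
    (hm : ∀ y ∈ Λ', ∫⁻ φ, ‖J x y * φ y‖ₑ ∂m ≤ w x y) :
    ∫⁻ φ, ‖effectiveField J Λ Λ' h φ x - effectiveField J Λ S 0 φ x‖ₑ ∂m ≤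
      ‖h x‖ₑ + ∑' y : {y // y ∉ S}, w x y := by
  set T := (Λ' \ Λ) \ (S \ Λ)
  have hT (y : V) (hy : y ∈ T) : y ∈ Λ' ∧ y ∉ S := by grind
  have h_diff (φ : V → ℝ) : effectiveField J Λ Λ' h φ x - effectiveField J Λ S 0 φ x =
      h x + ∑ y ∈ T, J x y * φ y := by
    rw [effectiveField, effectiveField,
      ← Finset.sum_sdiff (Finset.sdiff_subset_sdiff hS Finset.Subset.rfl), Pi.zero_apply]
    ring
  calc ∫⁻ φ, ‖effectiveField J Λ Λ' h φ x - effectiveField J Λ S 0 φ x‖ₑ ∂m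
      ≤ ∫⁻ φ, (‖h x‖ₑ + ∑ y ∈ T, ‖J x y * φ y‖ₑ) ∂m := lintegral_mono fun φ => by
        rw [h_diff]
        exact (enorm_add_le _ _).trans (add_le_add_right (enorm_sum_le _ _) _)
    _ = ‖h x‖ₑ + ∑ y ∈ T, ∫⁻ φ, ‖J x y * φ y‖ₑ ∂m := by
        rw [lintegral_add_left measurable_const, lintegral_const, measure_univ, mul_one,
          lintegral_finsetSum _ fun y _ => by fun_prop]
    _ ≤ ‖h x‖ₑ + ∑ y ∈ T, w x y := by
        gcongr with y hy
        exact hm y (hT y hy).1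
    _ = ‖h x‖ₑ + ∑ y ∈ T.subtype (· ∉ S), w x y := by
        rw [Finset.sum_subtype_of_mem _ fun y hy => (hT y hy).2]
    _ ≤ ‖h x‖ₑ + ∑' y : {y // y ∉ S}, w x y := by
        gcongr
        exact ENNReal.sum_le_tsum _

lemma edist_restrictTo_le (Λ : Finset V) (u v : V → ℝ) :
    edist (restrictTo Λ u) (restrictTo Λ v) ≤ ∑ x ∈ Λ, ‖u x - v x‖ₑ := by
  refine edist_pi_le_iff.2 fun x => ?_
  rw [edist_eq_enorm_sub]
  exact Finset.single_le_sum (f := fun x => ‖u x - v x‖ₑ) (fun _ _ => zero_le) x.2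

lemma measurable_restrictTo_effectiveField (Λ Λ' : Finset V) (h : V → ℝ) :
    Measurable fun φ => restrictTo Λ (effectiveField J Λ Λ' h φ) :=
  (measurable_restrictTo Λ).comp (measurable_effectiveField Λ Λ' h)

lemma LocallyTendsto.truncated_effectiveField (hμ : LocallyTendsto μ l ν) (Λ S : Finset V) :
    TendstoInDistribution (fun _ φ => restrictTo Λ (effectiveField J Λ S 0 φ)) l
      (fun φ => restrictTo Λ (effectiveField J Λ S 0 φ)) μ ν := by
  let g : (↥(S \ Λ) → ℝ) → (Λ → ℝ) := fun ψ x => ∑ y : ↥(S \ Λ), J x y * ψ y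
  have h_comp : g ∘ restrictTo (S \ Λ) = fun φ => restrictTo Λ (effectiveField J Λ S 0 φ) := by
    funext φ x
    simp only [g, Function.comp_apply, restrictTo, effectiveField, Pi.zero_apply, zero_add]
    exact Finset.sum_coe_sort (S \ Λ) fun y => J x y * φ y
  rw [← h_comp]
  exact (hμ (S \ Λ)).continuous_comp (by fun_prop)

lemma lintegral_edist_effectiveField_le (hΛs : Tendsto Λs l atTop) {h : ι → V → ℝ}
    (hh : ∀ x, Tendsto (fun i => h i x) l (nhds 0)) (hw : ∀ x, ∑' y, w x y ≠ ⊤)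
    (hm : ∀ x, ∀ᶠ i in l, ∀ y ∈ Λs i, ∫⁻ φ, ‖J x y * φ y‖ₑ ∂μ i ≤ w x y) (Λ : Finset V)
    {ε : ℝ} (hε : 0 < ε) :
    ∀ᶠ S in atTop, ∀ᶠ i in l, ∫⁻ φ, edist (restrictTo Λ (effectiveField J Λ (Λs i) (h i) φ))
      (restrictTo Λ (effectiveField J Λ S 0 φ)) ∂μ i ≤ ENNReal.ofReal ε := by
  have h_bound : Tendsto (fun p : Finset V × ι =>
      ∑ x ∈ Λ, (‖h p.2 x‖ₑ + ∑' y : {y // y ∉ p.1}, w x y)) (atTop ×ˢ l) (nhds 0) := by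
    have h_term (x : V) : Tendsto (fun p : Finset V × ι =>
        ‖h p.2 x‖ₑ + ∑' y : {y // y ∉ p.1}, w x y) (atTop ×ˢ l) (nhds 0) := by
      simpa using ((hh x).enorm.comp tendsto_snd).add
        ((ENNReal.tendsto_tsum_compl_atTop_zero (hw x)).comp tendsto_fst)
    simpa using tendsto_finsetSum Λ fun x _ => h_term x
  filter_upwards [(h_bound.eventually_lt_const (ENNReal.ofReal_pos.2 hε)).curry] with S hS
  filter_upwards [hS, (Filter.eventually_all_finset Λ).2 fun x _ => hm x,
    hΛs.eventually_ge_atTop S] with i hi hmi hSi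
  refine le_trans ?_ hi.le
  calc _ ≤ ∫⁻ φ, ∑ x ∈ Λ,
        ‖effectiveField J Λ (Λs i) (h i) φ x - effectiveField J Λ S 0 φ x‖ₑ ∂μ i :=
        lintegral_mono fun φ => edist_restrictTo_le Λ _ _
    _ = ∑ x ∈ Λ, ∫⁻ φ,
        ‖effectiveField J Λ (Λs i) (h i) φ x - effectiveField J Λ S 0 φ x‖ₑ ∂μ i :=
        lintegral_finsetSum _ fun x _ => by
          unfold effectiveField
          fun_prop
    _ ≤ _ := Finset.sum_le_sum fun x hx =>
        lintegral_enorm_effectiveField_sub_le Λ hSi (h i) (hmi x hx)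

lemma LocallyTendsto.effectiveField [Countable V] [l.NeBot] [l.IsCountablyGenerated]
    (hμ : LocallyTendsto μ l ν) (hΛs : Tendsto Λs l atTop) {h : ι → V → ℝ}
    (hh : ∀ x, Tendsto (fun i => h i x) l (nhds 0)) (hw : ∀ x, ∑' y, w x y ≠ ⊤)
    (hm : ∀ x, ∀ᶠ i in l, ∀ y ∈ Λs i, ∫⁻ φ, ‖J x y * φ y‖ₑ ∂μ i ≤ w x y) (Λ : Finset V) :
    TendstoInDistribution (fun i φ => restrictTo Λ (effectiveField J Λ (Λs i) (h i) φ)) l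
      (fun φ => restrictTo Λ (boundaryField J Λ φ)) μ ν := by
  have hν (x y : V) : ∫⁻ φ, ‖J x y * φ y‖ₑ ∂ν ≤ w x y := by
    refine hμ.lintegral_enorm_mul_le ?_
    filter_upwards [hm x, hΛs.eventually_ge_atTop {y}] with i hi hy
    exact hi y (hy (Finset.mem_singleton_self y))
  have h_summable : ∀ᵐ φ ∂ν, ∀ x, Summable fun y => J x y * φ y :=
    ae_all_iff.2 fun x => ae_summable_of_lintegral_enorm_le (hw x) (hν x)
  refine tendstoInDistribution_of_forall_lintegral_edist_le
    (fun i => (measurable_restrictTo_effectiveField Λ _ _).aemeasurable)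
    (hμ.truncated_effectiveField Λ)
    (tendstoInDistribution_of_ae_tendsto
      (fun S => (measurable_restrictTo_effectiveField Λ S 0).aemeasurable)
      ((measurable_restrictTo Λ).comp (measurable_boundaryField Λ)).aemeasurable ?_)
    fun ε hε => lintegral_edist_effectiveField_le hΛs hh hw hm Λ hε
  filter_upwards [h_summable] with φ hφ
  exact tendsto_pi_nhds.2 fun x => tendsto_effectiveField_atTop Λ (hφ x)

end LocallyTendsto

/-! ### Passing to the limit -/

section Limit

variable {V ι : Type*} {l : Filter ι} {J : V → V → ℝ} {f : ℝ → ℝ} {Mf β lam K M : ℝ}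
  {ρ : Measure ℝ} {Λs : ι → Finset V} {h : ι → V → ℝ} {ν : Measure (V → ℝ)}
  [IsProbabilityMeasure ν]

lemma exists_boundedContinuousFunction_integral_gibbsKernel [Countable V] [IsProbabilityMeasure ρ]
    (hJ : IsInteraction J f Mf) (hβ : 0 ≤ β) (hρ : HasGaussianMoments ρ) (Λ : Finset V)
    (g : BoundedContinuousFunction (Λ → ℝ) ℝ) :
    ∃ F : BoundedContinuousFunction (Λ → ℝ) ℝ,
      ∀ h, ∫ ψ, g ψ ∂gibbsKernel J β ρ Λ h = F (restrictTo Λ h) := by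
  have := isMarkovKernel_gibbsKernel hJ hβ hρ Λ
  let extend : (Λ → ℝ) → V → ℝ := fun u x => if hx : x ∈ Λ then u ⟨x, hx⟩ else 0
  have h_extend : Continuous extend := continuous_pi fun x => by
    by_cases hx : x ∈ Λ
    · simpa only [extend, dif_pos hx] using continuous_apply _
    · simpa only [extend, dif_neg hx] using continuous_const
  refine ⟨BoundedContinuousFunction.ofNormedAddCommGroup
    (fun u => ∫ ψ, g ψ ∂gibbsKernel J β ρ Λ (extend u))
    ((continuous_integral_gibbsKernel hJ hβ hρ g.continuous.measurable
      g.norm_coe_le_norm).comp h_extend) ‖g‖ fun u => ?_, fun h => ?_⟩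
  · exact g.norm_integral_le_norm _
  · refine congrArg (fun m => ∫ ψ, g ψ ∂m) (dependsOn_gibbsKernel Λ fun x hx => ?_)
    simp only [extend, dif_pos (Finset.mem_coe.1 hx), restrictTo]

lemma map_restrictTo_eq_bind_of_locallyTendsto [Countable V] [l.NeBot] [IsProbabilityMeasure ρ]
    [∀ i, IsProbabilityMeasure (fieldGibbs J β ρ (Λs i) (h i))] (hJ : IsInteraction J f Mf)
    (hβ : 0 ≤ β) (hρ : HasGaussianMoments ρ) (hΛs : Tendsto Λs l atTop)
    (hν : LocallyTendsto (fun i => fieldGibbs J β ρ (Λs i) (h i)) l ν) {Λ : Finset V}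
    (h_field : TendstoInDistribution
      (fun i φ => restrictTo Λ (effectiveField J Λ (Λs i) (h i) φ)) l
      (fun φ => restrictTo Λ (boundaryField J Λ φ))
      (fun i => fieldGibbs J β ρ (Λs i) (h i)) ν) :
    ν.map (restrictTo Λ) = (ν.map (boundaryField J Λ)).bind (gibbsKernel J β ρ Λ) := by
  have h_restrict := measurable_restrictTo Λ
  have h_boundary := measurable_boundaryField (J := J) Λ
  have := isMarkovKernel_gibbsKernel hJ hβ hρ Λ
  have := Measure.isProbabilityMeasure_map (μ := ν) h_restrict.aemeasurable
  have := Measure.isProbabilityMeasure_map (μ := ν) h_boundary.aemeasurable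
  refine ext_of_forall_integral_eq_of_IsFiniteMeasure fun g => ?_
  obtain ⟨F, hF⟩ := exists_boundedContinuousFunction_integral_gibbsKernel hJ hβ hρ Λ g
  have h_integral_bind {m : Measure (V → ℝ)} [IsProbabilityMeasure m] {X : (V → ℝ) → V → ℝ}
      (hX : Measurable X) : ∫ ψ, g ψ ∂(m.map X).bind (gibbsKernel J β ρ Λ) =
        ∫ u, F u ∂m.map fun φ => restrictTo Λ (X φ) := by
    have := Measure.isProbabilityMeasure_map (μ := m) hX.aemeasurable
    rw [integral_bind_kernel _ _ (g.integrable _)]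
    simp_rw [hF]
    rw [← integral_map h_restrict.aemeasurable F.continuous.measurable.aestronglyMeasurable,
      Measure.map_map h_restrict hX]
    rfl
  rw [h_integral_bind h_boundary]
  refine tendsto_nhds_unique
    ((ProbabilityMeasure.tendsto_iff_forall_integral_tendsto.1 (hν Λ).tendsto g).congr' ?_)
    (ProbabilityMeasure.tendsto_iff_forall_integral_tendsto.1 h_field.tendsto F)
  filter_upwards [hΛs.eventually_ge_atTop Λ] with i hi
  rw [ProbabilityMeasure.coe_mk, ProbabilityMeasure.coe_mk,
    map_restrictTo_fieldGibbs_eq_bind hJ hβ hρ hi,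
    h_integral_bind (measurable_effectiveField Λ (Λs i) (h i))]

lemma isGibbsMeasure_of_map_restrictTo_eq_bind [Countable V] [IsProbabilityMeasure ρ]
    (hJ : IsInteraction J f Mf) (hβ : 0 ≤ β) (hρ : HasGaussianMoments ρ)
    (hν : ∀ Λ, ν.map (restrictTo Λ) = (ν.map (boundaryField J Λ)).bind (gibbsKernel J β ρ Λ)) :
    IsGibbsMeasure J β ρ ν := by
  rintro Λ g hg ⟨C, hC⟩
  have := isMarkovKernel_gibbsKernel hJ hβ hρ Λ
  have h_restrict := (measurable_restrictTo Λ).aemeasurable (μ := ν)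
  have h_boundary := (measurable_boundaryField (J := J) Λ).aemeasurable (μ := ν)
  have := Measure.isProbabilityMeasure_map h_restrict
  have := Measure.isProbabilityMeasure_map h_boundary
  have hg_integrable : Integrable g (ν.map (restrictTo Λ)) :=
    .of_bound hg.aestronglyMeasurable C (ae_of_all _ hC)
  rw [← integral_map h_restrict hg.aestronglyMeasurable, hν Λ,
    integral_bind_kernel _ _ (hν Λ ▸ hg_integrable), integral_map h_boundary
      hg.stronglyMeasurable.integral_kernel.aestronglyMeasurable]
  simp_rw [gibbsKernel_boundaryField]

lemma IsInteraction.exists_lintegral_enorm_mul_fieldGibbs_le [IsProbabilityMeasure ρ]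
    (hJ : IsInteraction J f Mf) (hβ : 0 ≤ β) (hlam : 1 ≤ lam) (hρ : HasGaussianMoments ρ)
    (hK : ∀ K' ≥ K, IsBranchingThreshold J f ρ (2 * β * Mf * lam) M K') :
    ∃ w : V → V → ℝ≥0∞, (∀ x, ∑' y, w x y ≠ ⊤) ∧
      ∀ Λ h x, IsTempered J f lam Λ {x} h K → ∀ y ∈ Λ,
        ∫⁻ φ, ‖J x y * φ y‖ₑ ∂fieldGibbs J β ρ Λ h ≤ w x y := by
  obtain ⟨D, hD⟩ := hJ.exists_lintegral_abs_fieldGibbs_le hβ hlam hρ hK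
  refine ⟨fun x y => ENNReal.ofReal D * ENNReal.ofReal (|J x y| * f (J x y)), fun x => ?_,
    fun Λ h x hh y hy => ?_⟩
  · rw [ENNReal.tsum_mul_left]
    exact ENNReal.mul_ne_top ENNReal.ofReal_ne_top (hJ.summable x).tsum_ofReal_ne_top
  rcases eq_or_ne (J x y) 0 with hxy | hxy
  · simp [hxy]
  · calc ∫⁻ φ, ‖J x y * φ y‖ₑ ∂fieldGibbs J β ρ Λ h
        = ENNReal.ofReal |J x y| * ∫⁻ φ, ENNReal.ofReal |φ y| ∂fieldGibbs J β ρ Λ h := by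
          simp_rw [enorm_mul, Real.enorm_eq_ofReal_abs]
          rw [lintegral_const_mul _ (by fun_prop)]
      _ ≤ ENNReal.ofReal |J x y| * ENNReal.ofReal (D * f (J x y)) := by
          gcongr
          exact hD Λ h x y hh hy hxy
      _ = ENNReal.ofReal D * ENNReal.ofReal (|J x y| * f (J x y)) := by
          rw [ENNReal.ofReal_mul' (hJ.pos _).le, ENNReal.ofReal_mul (abs_nonneg _), mul_left_comm]

lemma IsInteraction.isRegularWRT_of_locallyTendsto [l.NeBot] [IsProbabilityMeasure ρ]
    [∀ i, IsProbabilityMeasure (fieldGibbs J β ρ (Λs i) (h i))] (hJ : IsInteraction J f Mf)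
    (hβ : 0 ≤ β) (hlam : 1 ≤ lam) (hρ : HasGaussianMoments ρ)
    (hK : IsBranchingThreshold J f ρ (2 * β * Mf * lam) M K) {a : ℝ}
    (ha : 2 * β * Mf * lam ≤ a) (hΛs : Tendsto Λs l atTop)
    (hh : ∀ Δ, ∀ᶠ i in l, IsTempered J f lam (Λs i) Δ (h i) K)
    (hν : LocallyTendsto (fun i => fieldGibbs J β ρ (Λs i) (h i)) l ν) :
    IsRegularWRT (rhoMod ρ a) ν := by
  have := isFiniteMeasure_rhoMod hρ a
  set C := 2 * (ENNReal.ofReal (Real.exp (2 * β * Mf * lam * K ^ 2)) * (ρ {u | |u| ≤ M})⁻¹)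
  have hC : C ≠ ⊤ := ENNReal.mul_ne_top ENNReal.ofNat_ne_top
    (ENNReal.mul_ne_top ENNReal.ofReal_ne_top (ENNReal.inv_ne_top.2 hK.measure_ne_zero))
  obtain ⟨B, hB, hCB⟩ := exists_smul_pi_le_exp_smul_prodN V (rhoMod ρ a) hC
  refine ⟨B, hB, fun Δ => le_trans ?_ (hCB Δ)⟩
  have : (C ^ Δ.card • Measure.pi fun _ : Δ => rhoMod ρ a).OuterRegular :=
    Measure.OuterRegular.smul _ (ENNReal.pow_ne_top hC)
  refine le_of_tendsto_of_eventually_le (hν Δ).tendsto ?_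
  filter_upwards [hh Δ, hΛs.eventually_ge_atTop Δ] with i hi hΔ
  exact hJ.map_fieldGibbs_le_smul_pi hβ hlam hρ hK ha hi hΔ

lemma IsInteraction.isGibbsMeasure_of_locallyTendsto [Countable V] [l.NeBot]
    [l.IsCountablyGenerated] [IsProbabilityMeasure ρ]
    [∀ i, IsProbabilityMeasure (fieldGibbs J β ρ (Λs i) (h i))] (hJ : IsInteraction J f Mf)
    (hβ : 0 ≤ β) (hlam : 1 ≤ lam) (hρ : HasGaussianMoments ρ)
    (hK : ∀ K' ≥ K, IsBranchingThreshold J f ρ (2 * β * Mf * lam) M K')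
    (hΛs : Tendsto Λs l atTop) (hh : ∀ x, ∀ᶠ i in l, IsTempered J f lam (Λs i) {x} (h i) K)
    (hh_zero : ∀ x, Tendsto (fun i => h i x) l (nhds 0))
    (hν : LocallyTendsto (fun i => fieldGibbs J β ρ (Λs i) (h i)) l ν) :
    IsGibbsMeasure J β ρ ν := by
  obtain ⟨w, hw, h_moment⟩ := hJ.exists_lintegral_enorm_mul_fieldGibbs_le hβ hlam hρ hK
  exact isGibbsMeasure_of_map_restrictTo_eq_bind hJ hβ hρ fun Λ =>
    map_restrictTo_eq_bind_of_locallyTendsto hJ hβ hρ hΛs hν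
      (hν.effectiveField hΛs hh_zero hw (fun x => (hh x).mono fun i => h_moment (Λs i) (h i) x) Λ)

lemma locallyTendsto_fieldGibbs_of_tendsto_integral_marg [IsProbabilityMeasure ρ] {ξ : V → ℝ}
    [∀ i, IsProbabilityMeasure (fieldGibbs J β ρ (Λs i) (boundaryField J (Λs i) ξ))]
    (hΛs : Tendsto Λs l atTop)
    (hν : ∀ (Δ : Finset V) (g : (Δ → ℝ) → ℝ), Continuous g → (∃ C, ∀ ψ, |g ψ| ≤ C) →
      Tendsto (fun i => if hΔ : Δ ⊆ Λs i then
          ∫ ψ, g ψ ∂(marg hΔ (gibbs J β ρ (Λs i) ξ)) else 0)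
        l (nhds (∫ φ, g (restrictTo Δ φ) ∂ν))) :
    LocallyTendsto (fun i => fieldGibbs J β ρ (Λs i) (boundaryField J (Λs i) ξ)) l ν := by
  intro Δ
  have h_restrict := measurable_restrictTo Δ
  refine ⟨fun i => h_restrict.aemeasurable, h_restrict.aemeasurable,
    ProbabilityMeasure.tendsto_iff_forall_integral_tendsto.2 fun g => ?_⟩
  rw [ProbabilityMeasure.coe_mk, integral_map h_restrict.aemeasurable
    g.continuous.measurable.aestronglyMeasurable]
  refine (hν Δ g g.continuous ⟨‖g‖, g.norm_coe_le_norm⟩).congr' ?_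
  filter_upwards [hΛs.eventually_ge_atTop Δ] with i hi
  rw [dif_pos (show Δ ⊆ Λs i from hi), marg_gibbs_eq_map_fieldGibbs]
  rfl

theorem IsInteraction.isRegularWRT_and_isGibbsMeasure [Countable V] [l.NeBot]
    [l.IsCountablyGenerated] [IsProbabilityMeasure ρ] (hJ : IsInteraction J f Mf) {D : ℝ}
    (hf : ∀ t, t ≠ 0 → Real.exp (-(f t) ^ 2) ≤ D * |t|) (hβ : 0 ≤ β) (hlam : 1 ≤ lam)
    (hρ : HasGaussianMoments ρ) (hΛs : Tendsto Λs l atTop) {ξ : V → ℝ}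
    (hξ : ∀ x, Summable fun y => J x y * ξ y) {A : ℝ}
    (hA : ∀ x, ∀ᶠ i in l, ARealL J f lam ξ 1 x (Λs i) ≤ A)
    (hν : ∀ (Δ : Finset V) (g : (Δ → ℝ) → ℝ), Continuous g → (∃ C, ∀ ψ, |g ψ| ≤ C) →
      Tendsto (fun i => if hΔ : Δ ⊆ Λs i then
          ∫ ψ, g ψ ∂(marg hΔ (gibbs J β ρ (Λs i) ξ)) else 0)
        l (nhds (∫ φ, g (restrictTo Δ φ) ∂ν)))
    {a : ℝ} (ha : 2 * β * Mf * lam ≤ a) :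
    IsRegularWRT (rhoMod ρ a) ν ∧ IsGibbsMeasure J β ρ ν := by
  have (i : ι) := isProbabilityMeasure_fieldGibbs hJ hβ hρ (Λs i) (boundaryField J (Λs i) ξ)
  have h_local := locallyTendsto_fieldGibbs_of_tendsto_integral_marg hΛs hν
  obtain ⟨M, hM⟩ := exists_eventually_isBranchingThreshold hJ hf hρ (2 * β * Mf * lam)
  obtain ⟨K, hK, hAK⟩ := ((eventually_forall_ge_atTop.2 hM).and (eventually_gt_atTop A)).exists
  have h_tempered (Δ : Finset V) :
      ∀ᶠ i in l, IsTempered J f lam (Λs i) Δ (boundaryField J (Λs i) ξ) K := by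
    filter_upwards [(Filter.eventually_all_finset Δ).2 fun x _ => hA x,
      hΛs.eventually_ge_atTop Δ] with i hi hΔ
    exact hJ.isTempered_boundaryField hlam hΔ fun x hx => (hi x hx).trans_lt hAK
  exact ⟨hJ.isRegularWRT_of_locallyTendsto hβ hlam hρ (hK K le_rfl) ha hΛs h_tempered h_local,
    hJ.isGibbsMeasure_of_locallyTendsto hβ hlam hρ hK hΛs (fun x => h_tempered {x})
      (fun x => (tendsto_boundaryField_atTop (hξ x)).comp hΛs) h_local⟩

end Limit

/-! ### Normalization of the single-site measure -/

section Normalization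

variable {V : Type*} {ρ : Measure ℝ} {c : ℝ≥0∞}

lemma pi_const_smul {ι α : Type*} [Fintype ι] [MeasurableSpace α] (μ : Measure α) [SigmaFinite μ]
    [SigmaFinite (c • μ)] :
    (Measure.pi fun _ : ι => c • μ) = c ^ Fintype.card ι • Measure.pi fun _ => μ := by
  refine Measure.pi_eq fun s _ => ?_
  simp [Measure.pi_pi, Finset.prod_mul_distrib]

lemma inv_smul_univ_smul_smul {α : Type*} [MeasurableSpace α] (μ : Measure α) (hc : c ≠ 0)
    (hc' : c ≠ ⊤) : ((c • μ) Set.univ)⁻¹ • (c • μ) = (μ Set.univ)⁻¹ • μ := by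
  rw [Measure.smul_apply, smul_eq_mul, ENNReal.mul_inv (.inl hc) (.inl hc'), smul_smul,
    mul_right_comm, ENNReal.inv_mul_cancel hc hc', one_mul]

lemma gibbs_smul [IsFiniteMeasure ρ] (J : V → V → ℝ) (β : ℝ) (hc : c ≠ 0) (hc' : c ≠ ⊤)
    (Λ : Finset V) (ξ : V → ℝ) : gibbs J β (c • ρ) Λ ξ = gibbs J β ρ Λ ξ := by
  have := ρ.smul_finite hc'
  rw [gibbs, pi_const_smul, withDensity_smul_measure,
    inv_smul_univ_smul_smul _ (pow_ne_zero _ hc) (ENNReal.pow_ne_top hc'), gibbs]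

lemma prodN_smul [IsFiniteMeasure ρ] (hc : c ≠ 0) (hc' : c ≠ ⊤) (Λ : Finset V) :
    prodN (c • ρ) Λ = prodN ρ Λ := by
  have := ρ.smul_finite hc'
  rw [prodN, pi_const_smul, inv_smul_univ_smul_smul _ (pow_ne_zero _ hc) (ENNReal.pow_ne_top hc'),
    prodN]

lemma isGibbsMeasure_smul_iff [IsFiniteMeasure ρ] {J : V → V → ℝ} {β : ℝ} {ν : Measure (V → ℝ)}
    (hc : c ≠ 0) (hc' : c ≠ ⊤) : IsGibbsMeasure J β (c • ρ) ν ↔ IsGibbsMeasure J β ρ ν := by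
  simp only [IsGibbsMeasure, gibbs_smul J β hc hc']

lemma isRegularWRT_smul_iff [IsFiniteMeasure ρ] {ν : Measure (V → ℝ)} (hc : c ≠ 0)
    (hc' : c ≠ ⊤) : IsRegularWRT (c • ρ) ν ↔ IsRegularWRT ρ ν := by
  simp only [IsRegularWRT, prodN_smul hc hc']

lemma HasGaussianMoments.smul (hρ : HasGaussianMoments ρ) (hc : c ≠ ⊤) :
    HasGaussianMoments (c • ρ) := fun a => by
  rw [lintegral_smul_measure]
  exact ENNReal.mul_ne_top hc (hρ a)

lemma HasGaussianMoments.isFiniteMeasure (hρ : HasGaussianMoments ρ) : IsFiniteMeasure ρ :=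
  ⟨by simpa [lt_top_iff_ne_top] using hρ 0⟩

lemma hasGaussianMoments_of_forall_pos
    (hρ : ∀ a : ℝ, 0 < a → ∫⁻ u, ENNReal.ofReal (Real.exp (a * u ^ 2)) ∂ρ < ⊤) :
    HasGaussianMoments ρ := fun a => by
  refine ((lintegral_mono fun u => ?_).trans_lt (hρ (max a 1) (by positivity))).ne
  gcongr
  exact le_max_left a 1

end Normalization

theorem stmt12_general {V ι : Type*} [Countable V] {l : Filter ι} [l.NeBot]
    [l.IsCountablyGenerated] {J : V → V → ℝ} {f : ℝ → ℝ} {Mf D β lam A a : ℝ} {ρ : Measure ℝ}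
    {Λs : ι → Finset V} {ξ : V → ℝ} {ν : Measure (V → ℝ)} [IsProbabilityMeasure ν]
    (hJ : IsInteraction J f Mf) (hf : ∀ t, t ≠ 0 → Real.exp (-(f t) ^ 2) ≤ D * |t|)
    (hβ : 0 ≤ β) (hρ : HasGaussianMoments ρ) (hρ_ne : ρ ≠ 0) (hΛs : Tendsto Λs l atTop)
    (hlam : 1 ≤ lam) (hξ : ∀ x, Summable fun y => J x y * ξ y)
    (hA : ∀ x, ∀ᶠ i in l, ARealL J f lam ξ 1 x (Λs i) ≤ A)
    (hν : ∀ (Δ : Finset V) (g : (Δ → ℝ) → ℝ), Continuous g → (∃ C, ∀ ψ, |g ψ| ≤ C) →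
      Tendsto (fun i => if hΔ : Δ ⊆ Λs i then
          ∫ ψ, g ψ ∂(marg hΔ (gibbs J β ρ (Λs i) ξ)) else 0)
        l (nhds (∫ φ, g (restrictTo Δ φ) ∂ν)))
    (ha : 2 * β * Mf * lam ≤ a) :
    IsRegularWRT (rhoMod ρ a) ν ∧ IsGibbsMeasure J β ρ ν := by
  have := hρ.isFiniteMeasure
  have := isFiniteMeasure_rhoMod hρ a
  have : NeZero ρ := ⟨hρ_ne⟩
  set c := (ρ Set.univ)⁻¹
  have hc : c ≠ 0 := ENNReal.inv_ne_zero.2 (measure_ne_top _ _)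
  have hc' : c ≠ ⊤ := ENNReal.inv_ne_top.2 (NeZero.ne _)
  have : IsProbabilityMeasure (c • ρ) := isProbabilityMeasureSMul
  rw [← isGibbsMeasure_smul_iff hc hc', ← isRegularWRT_smul_iff hc hc', rhoMod,
    ← withDensity_smul_measure]
  exact hJ.isRegularWRT_and_isGibbsMeasure hf hβ hlam (hρ.smul hc') hΛs hξ hA
    (by simpa only [gibbs_smul J β hc hc'] using hν) ha

/-- Corollary `prop: limit of finite n=2`: limits of finite-volume
measures with tempered boundary conditions are regular Gibbs measures. -/
theorem stmt12 {V : Type*} [Countable V] (J : V → V → ℝ) (f : ℝ → ℝ)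
    (δf Mf : ℝ) (hδf : 0 < δf) (hMf : 0 < Mf)
    (hJsymm : ∀ x y, J x y = J y x)
    (hf1 : ∀ t, 1 ≤ f t)
    (hflog : ∀ t : ℝ, t ≠ 0 → |t| < δf → (Real.log (|t|⁻¹)) ^ ((1 : ℝ) / 2) ≤ f t)
    (hJsum : ∀ x, Summable fun y => |J x y| * f (J x y))
    (hJbound : ∀ x, ∑' y, |J x y| * f (J x y) ≤ Mf)
    (β : ℝ) (hβ : 0 ≤ β) (ρ : Measure ℝ)
    (hρ : ∀ a : ℝ, 0 < a →
      0 < ∫⁻ u, ENNReal.ofReal (Real.exp (a * u ^ 2)) ∂ρ ∧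
      ∫⁻ u, ENNReal.ofReal (Real.exp (a * u ^ 2)) ∂ρ < ⊤)
    (Λseq : ℕ → Finset V) (hmono : Monotone Λseq) (hcover : ∀ x : V, ∃ i, x ∈ Λseq i)
    (lam : ℝ) (hlam : 1 ≤ lam) (ξ : V → ℝ)
    (hξsum : ∀ x : V, Summable fun y => |J x y * ξ y|)
    (Amax : ℝ) (hAmax : 1 ≤ Amax)
    (hA : ∀ (x : V) (C : ℝ), 1 ≤ C → ∀ ε : ℝ, 0 < ε → ∃ Λ₀ : Finset V,
      ∀ Λ : Finset V, Λ₀ ⊆ Λ → ARealL J f lam ξ C x (↑Λ) ≤ Amax + ε)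
    (ν : Measure (V → ℝ)) [IsProbabilityMeasure ν]
    (hconv : ∀ (Λ' : Finset V) (g : (↥Λ' → ℝ) → ℝ), Continuous g →
      (∃ K, ∀ ψ, |g ψ| ≤ K) →
      Tendsto (fun i => if h : Λ' ⊆ Λseq i then
          ∫ ψ, g ψ ∂(marg h (gibbs J β ρ (Λseq i) ξ)) else 0)
        atTop (nhds (∫ φ, g (restrictTo Λ' φ) ∂ν)))
    (a : ℝ) (ha : 2 * β * Mf * lam ≤ a) :
    IsRegularWRT (rhoMod ρ a) ν ∧ IsGibbsMeasure J β ρ ν := by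
  have hΛs := tendsto_atTop_finset_of_monotone hmono hcover
  exact stmt12_general ⟨hJsymm, hf1, hJsum, hJbound⟩
    (fun t ht => exp_neg_sq_le_mul_abs hδf ht (hflog t ht)) hβ
    (hasGaussianMoments_of_forall_pos fun a ha => (hρ a ha).2)
    (fun h => by simpa [h] using (hρ 1 one_pos).1) hΛs hlam (fun x => (hξsum x).of_abs)
    (fun x => hΛs.eventually (eventually_atTop.2 (hA x 1 le_rfl 1 one_pos))) hconv ha
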